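/- arXiv:1409.2117 — 4 statements merged into one kernel-verified Lean document; each statement's English description precedes it below -/
import Mathlib

section
/- Every connected vertex-transitive non-bipartite simple graph of even order at least 6 whose common vertex degree is at least 5 is 2-extendable. -/
open SimpleGraph

section Defs

variable {V : Type*}

/-- A simple graph is vertex-transitive if any vertex can be mapped to any other
by a graph automorphism. -/
def VertexTransitive (G : SimpleGraph V) : Prop :=
  ∀ x y : V, ∃ φ : G ≃g G, φ x = y

/-- A graph is `p`-factor-critical if the removal of any set of `p` vertices
results in a graph with a perfect matching. -/
def PFactorCritical (G : SimpleGraph V) (p : ℕ) : Prop :=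
  ∀ X : Set V, X.ncard = p → ∃ M : (G.induce Xᶜ).Subgraph, M.IsPerfectMatching

/-- A graph is factor-critical if the removal of any single vertex results in a
graph with a perfect matching. -/
def IsFactorCritical {W : Type*} (H : SimpleGraph W) : Prop :=
  ∀ v : W, ∃ M : (H.induce ({v}ᶜ : Set W)).Subgraph, M.IsPerfectMatching

/-- `∇(X)`: the set of edges of `G` with exactly one end in `X`. -/
def edgeBoundary (G : SimpleGraph V) (X : Set V) : Set (Sym2 V) :=
  {e | e ∈ G.edgeSet ∧ ∃ x ∈ X, ∃ y ∈ Xᶜ, e = s(x, y)}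

/-- The set of edges of `G` with both ends in `X`. -/
def edgesWithin (G : SimpleGraph V) (X : Set V) : Set (Sym2 V) :=
  {e | e ∈ G.edgeSet ∧ ∀ v ∈ e, v ∈ X}

/-- The set of edges of `G` with one end in `A` and the other end in `S \ A`
(i.e. the edge boundary of `A` inside the induced subgraph `G[S]` when `A ⊆ S`). -/
def inducedEdgeBoundary (G : SimpleGraph V) (S A : Set V) : Set (Sym2 V) :=
  {e | e ∈ G.edgeSet ∧ ∃ x ∈ A, ∃ y ∈ S \ A, e = s(x, y)}

/-- `F` is an `s`-restricted edge-cut of `G` if deleting `F` disconnects `G` and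
every component of `G − F` has at least `s` vertices. -/
def IsRestrictedEdgeCut (G : SimpleGraph V) (s : ℕ) (F : Set (Sym2 V)) : Prop :=
  F ⊆ G.edgeSet ∧ ¬ (G.deleteEdges F).Connected ∧
    ∀ c : (G.deleteEdges F).ConnectedComponent, s ≤ c.supp.ncard

/-- `λ_s(G)`: the minimum cardinality of an `s`-restricted edge-cut of `G`. -/
noncomputable def lambdaS (G : SimpleGraph V) (s : ℕ) : ℕ :=
  sInf (Set.ncard '' {F | IsRestrictedEdgeCut G s F})

/-- A `λ_s`-fragment: a vertex set whose edge boundary is an `s`-restricted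
edge-cut of minimum cardinality `λ_s(G)`. -/
def IsLambdaFragment (G : SimpleGraph V) (s : ℕ) (X : Set V) : Prop :=
  IsRestrictedEdgeCut G s (edgeBoundary G X) ∧ (edgeBoundary G X).ncard = lambdaS G s

/-- A `λ_s`-atom: a `λ_s`-fragment of minimum cardinality. -/
def IsLambdaAtom (G : SimpleGraph V) (s : ℕ) (X : Set V) : Prop :=
  IsLambdaFragment G s X ∧ ∀ Y : Set V, IsLambdaFragment G s Y → X.ncard ≤ Y.ncard

/-- The odd girth of `G`: the length of a shortest odd cycle of `G`. -/
noncomputable def oddGirth (G : SimpleGraph V) : ℕ :=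
  sInf {n | Odd n ∧ ∃ (v : V) (c : G.Walk v v), c.IsCycle ∧ c.length = n}

/-- `X` is an independent set of `G`. -/
def IsIndependentSet (G : SimpleGraph V) (X : Set V) : Prop :=
  ∀ x ∈ X, ∀ y ∈ X, ¬ G.Adj x y

/-- The independence number `α(G)`. -/
noncomputable def indepNum (G : SimpleGraph V) : ℕ :=
  sSup {n | ∃ X : Set V, IsIndependentSet G X ∧ X.ncard = n}

/-- The number of trivial (single-vertex) components of `G − X`. -/
noncomputable def trivialComponentCount (G : SimpleGraph V) (X : Set V) : ℕ :=
  {c : (G.induce Xᶜ).ConnectedComponent | c.supp.ncard = 1}.ncard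

/-- The number of odd components of `G − X`. -/
noncomputable def oddComponentCount (G : SimpleGraph V) (X : Set V) : ℕ :=
  {c : (G.induce Xᶜ).ConnectedComponent | Odd c.supp.ncard}.ncard

/-- The number of nontrivial components of `G − X`. -/
noncomputable def nontrivialComponentCount (G : SimpleGraph V) (X : Set V) : ℕ :=
  {c : (G.induce Xᶜ).ConnectedComponent | 2 ≤ c.supp.ncard}.ncard

/-- An imprimitive block of `G`: a proper non-empty vertex set that every
automorphism either fixes setwise or maps to a disjoint set. -/
def IsImprimitiveBlock (G : SimpleGraph V) (X : Set V) : Prop :=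
  X.Nonempty ∧ X ≠ Set.univ ∧ ∀ φ : G ≃g G, (⇑φ) '' X = X ∨ ((⇑φ) '' X) ∩ X = ∅

/-- A connected graph is `q`-extendable if it has a perfect matching and every
matching of size `q` is contained in a perfect matching. -/
def Extendable (G : SimpleGraph V) (q : ℕ) : Prop :=
  (∃ M : G.Subgraph, M.IsPerfectMatching) ∧
    ∀ M : G.Subgraph, M.IsMatching → M.edgeSet.ncard = q →
      ∃ P : G.Subgraph, P.IsPerfectMatching ∧ M ≤ P

end Defs

/-! If a matching of two edges does not extend, Tutte's theorem yields a set `X` containing its four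
ends such that `G - X` has at least `#X - 2` odd components. Two features of vertex-transitive
graphs contradict this. The first is vertex expansion: a smallest set with the fewest surplus
neighbours is a block of imprimitivity, and counting in the quotient shows that `#N(S) ≥ #S + 4`
unless `S` dominates the graph, so that at least two of the odd components are nontrivial. The
second is edge connectivity: a smallest set achieving the minimum edge cut with two vertices on both
sides is a block as well, unless every such cut has at least `2 k - 2` edges.

In the latter case, counting the edges that leave `X` forces exactly two nontrivial components and
equality everywhere, which a parity argument excludes. In the former case, each vertex has exactly
one neighbour outside its block, so that the edges between blocks form a perfect matching. Edge cuts
still have at least `k` edges, so every odd component splits some block; charging the edges inside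
the blocks against the `k - 1` inner edges at each vertex of `X` gives the contradiction. -/

namespace TwoExtendable

open Finset
open scoped Pointwise

variable {V : Type*} {G : SimpleGraph V}

lemma smul_compl [Fintype V] [DecidableEq V] (φ : G ≃g G) (S : Finset V) : φ • Sᶜ = (φ • S)ᶜ := by
  simp only [← coe_inj, coe_smul_finset, coe_compl, Set.smul_set_compl]

lemma eq_univ_of_adj_closed [Fintype V] {S : Finset V} (hconn : G.Connected) (hS : S.Nonempty)
    (hclosed : ∀ v ∈ S, ∀ w, G.Adj v w → w ∈ S) : S = univ := by
  obtain ⟨v, hv⟩ := hS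
  refine eq_univ_iff_forall.2 fun w ↦ ?_
  obtain ⟨p⟩ := hconn.preconnected v w
  induction p with
  | nil => exact hv
  | cons h _ ih => exact ih (hclosed _ hv _ h)

section EdgeCounting

variable [DecidableRel G.Adj] {S S' T T' U : Finset V} {k : ℕ}

lemma card_interedges_comm (S T : Finset V) : #(G.interedges S T) = #(G.interedges T S) :=
  have := G.symm
  Rel.card_interedges_comm S T

lemma card_interedges_mono (hS : S ⊆ S') (hT : T ⊆ T') :
    #(G.interedges S T) ≤ #(G.interedges S' T') :=
  card_le_card (G.interedges_mono hS hT)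

lemma card_interedges_singleton_left (v : V) (T : Finset V) :
    #(G.interedges {v} T) = #{w ∈ T | G.Adj v w} := by
  rw [interedges_def, singleton_product, filter_map, card_map]
  rfl

lemma card_interedges_eq_sum (S T : Finset V) :
    #(G.interedges S T) = ∑ v ∈ S, #(G.interedges {v} T) := by
  simp only [interedges_def, card_filter, sum_product, sum_singleton]

lemma card_interedges_union_right [DecidableEq V] (h : Disjoint T U) :
    #(G.interedges S (T ∪ U)) = #(G.interedges S T) + #(G.interedges S U) := by
  rw [← card_union_of_disjoint (G.interedges_disjoint_right S h), interedges_def, interedges_def,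
    interedges_def, product_union, filter_union]

lemma card_interedges_union_left [DecidableEq V] (h : Disjoint S T) :
    #(G.interedges (S ∪ T) U) = #(G.interedges S U) + #(G.interedges T U) := by
  rw [card_interedges_comm, card_interedges_union_right h, card_interedges_comm U,
    card_interedges_comm U]

lemma card_interedges_self_add_card_le (S : Finset V) :
    #(G.interedges S S) + #S ≤ #S * #S := by
  classical
  rw [card_interedges_eq_sum, card_eq_sum_ones, ← sum_add_distrib, sum_mul, ← card_eq_sum_ones]
  refine sum_le_sum fun v hv ↦ ?_
  have hsub : {w ∈ S | G.Adj v w} ⊆ S.erase v := fun w hw ↦ by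
    obtain ⟨hwS, hadj⟩ := mem_filter.1 hw
    exact mem_erase.2 ⟨hadj.ne', hwS⟩
  have := card_le_card hsub
  rw [card_erase_of_mem hv] at this
  rw [card_interedges_singleton_left, one_mul]
  have := card_pos.2 ⟨v, hv⟩
  omega

lemma even_card_interedges_self (S : Finset V) : Even #(G.interedges S S) := by
  classical
  induction S using Finset.induction_on with
  | empty => simp
  | insert v S hv ih =>
    have hdisj : Disjoint {v} S := disjoint_singleton_left.2 hv
    have hloop : #(G.interedges {v} {v}) = 0 := by simp [card_interedges_singleton_left]
    rw [insert_eq, card_interedges_union_left hdisj, card_interedges_union_right hdisj,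
      card_interedges_union_right hdisj, card_interedges_comm S {v}, hloop, zero_add, ← add_assoc]
    exact (Even.add_self _).add ih

lemma card_interedges_univ [Fintype V] (hreg : G.IsRegularOfDegree k) (S : Finset V) :
    #(G.interedges S univ) = k * #S := by
  have hdeg (v : V) : #(G.interedges {v} univ) = k := by
    rw [card_interedges_singleton_left, ← hreg v, ← card_neighborFinset_eq_degree,
      neighborFinset_eq_filter]
  simp only [card_interedges_eq_sum S, hdeg, sum_const, smul_eq_mul, mul_comm]

variable [DecidableEq V]

lemma sum_card_interedges_inter_le {K : Finset (Finset V)} {X : Finset V}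
    (hK : (K : Set (Finset V)).PairwiseDisjoint id) (hX : ∀ C ∈ K, Disjoint X C)
    (S U : Finset V) :
    ∑ C ∈ K, #(G.interedges S (C ∩ U)) + #(G.interedges S (X ∩ U)) ≤ #(G.interedges S U) := by
  have hdisj : (K : Set (Finset V)).PairwiseDisjoint fun C ↦ C ∩ U :=
    hK.mono fun C ↦ inter_subset_left
  have hX' : Disjoint (K.biUnion fun C ↦ C ∩ U) (X ∩ U) :=
    (disjoint_biUnion_left _ _ _).2 fun C hC ↦
      (hX C hC).symm.mono inter_subset_left inter_subset_left
  rw [← card_biUnion fun C hC D hD hCD ↦ G.interedges_disjoint_right S (hdisj hC hD hCD),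
    ← G.interedges_biUnion_right, ← card_interedges_union_right hX']
  refine card_interedges_mono Subset.rfl (union_subset ?_ inter_subset_right)
  exact biUnion_subset.2 fun C _ ↦ inter_subset_right

lemma card_interedges_smul (φ : G ≃g G) (S T : Finset V) :
    #(G.interedges (φ • S) (φ • T)) = #(G.interedges S T) := by
  refine card_bij (fun p _ ↦ φ⁻¹ • p) (fun p hp ↦ ?_) (fun p _ q _ h ↦ smul_left_cancel _ h)
    fun p hp ↦ ⟨φ • p, ?_, inv_smul_smul φ p⟩
  · obtain ⟨hS, hT, hadj⟩ := G.mem_interedges_iff.1 hp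
    exact G.mem_interedges_iff.2 ⟨inv_smul_mem_iff.2 hS, inv_smul_mem_iff.2 hT,
      (φ⁻¹).map_adj_iff.2 hadj⟩
  · obtain ⟨hS, hT, hadj⟩ := G.mem_interedges_iff.1 hp
    exact G.mem_interedges_iff.2 ⟨smul_mem_smul_finset hS, smul_mem_smul_finset hT,
      φ.map_adj_iff.2 hadj⟩

variable [Fintype V]

lemma card_interedges_add_card_interedges_compl (hreg : G.IsRegularOfDegree k)
    (S T : Finset V) : #(G.interedges S T) + #(G.interedges S Tᶜ) = k * #S := by
  rw [← card_interedges_union_right disjoint_compl_right, union_compl, card_interedges_univ hreg]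

variable (G) in
/-- The number of edges leaving `S`: the size of the edge boundary `∇(S)`. -/
def cutSize (S : Finset V) : ℕ := #(G.interedges S Sᶜ)

lemma cutSize_compl (S : Finset V) : cutSize G Sᶜ = cutSize G S := by
  rw [cutSize, compl_compl, card_interedges_comm, cutSize]

lemma card_interedges_self_add_cutSize (hreg : G.IsRegularOfDegree k) (S : Finset V) :
    #(G.interedges S S) + cutSize G S = k * #S :=
  card_interedges_add_card_interedges_compl hreg S S

lemma mul_card_add_card_le_cutSize_add (hreg : G.IsRegularOfDegree k) (S : Finset V) :
    k * #S + #S ≤ cutSize G S + #S * #S := by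
  have := card_interedges_self_add_cutSize hreg S
  have := card_interedges_self_add_card_le (G := G) S
  omega

lemma cutSize_inter_add_cutSize_union_le (S T : Finset V) :
    cutSize G (S ∩ T) + cutSize G (S ∪ T) ≤ cutSize G S + cutSize G T := by
  unfold cutSize
  rw [← card_union_add_card_inter, ← card_union_add_card_inter (G.interedges S Sᶜ)]
  refine add_le_add (card_le_card fun p hp ↦ ?_) (card_le_card fun p hp ↦ ?_) <;>
    simp only [mem_union, mem_inter, mem_interedges_iff, mem_compl] at hp ⊢ <;> tauto

lemma cutSize_sdiff_add_cutSize_sdiff_le (S T : Finset V) :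
    cutSize G (S \ T) + cutSize G (T \ S) ≤ cutSize G S + cutSize G T := by
  have h := cutSize_inter_add_cutSize_union_le (G := G) S Tᶜ
  have hunion : S ∪ Tᶜ = (T \ S)ᶜ := by
    rw [sdiff_eq_inter_compl, compl_inter, compl_compl, union_comm]
  rwa [cutSize_compl T, hunion, cutSize_compl, ← sdiff_eq_inter_compl] at h

lemma cutSize_smul (φ : G ≃g G) (S : Finset V) : cutSize G (φ • S) = cutSize G S := by
  rw [cutSize, ← smul_compl, card_interedges_smul, cutSize]

lemma cutSize_pos (hconn : G.Connected) (hS : S.Nonempty) (hS' : S ≠ univ) :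
    0 < cutSize G S := by
  by_contra! h
  refine hS' (eq_univ_of_adj_closed hconn hS fun v hv w hvw ↦ ?_)
  by_contra hw
  have hmem : (v, w) ∈ G.interedges S Sᶜ :=
    G.mk_mem_interedges_iff.2 ⟨hv, mem_compl.2 hw, hvw⟩
  exact (card_pos.2 ⟨_, hmem⟩).not_ge h

end EdgeCounting

section Blocks

variable [DecidableEq V]

/-- The partition `P` splits `S` into whole parts. -/
def Saturated [Fintype V] (P : Finpartition (univ : Finset V)) (S : Finset V) : Prop :=
  ∀ v ∈ S, P.part v ⊆ S

lemma Saturated.compl [Fintype V] {P : Finpartition (univ : Finset V)} {S : Finset V}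
    (hS : Saturated P S) : Saturated P Sᶜ := by
  intro v hv w hw
  rw [mem_compl] at hv ⊢
  intro hwS
  have hpart : P.part w = P.part v := P.part_eq_of_mem (P.part_mem.2 (mem_univ v)) hw
  exact hv (hS w hwS (hpart ▸ P.mem_part (mem_univ v)))

lemma Saturated.card_eq [Fintype V] {P : Finpartition (univ : Finset V)} {S : Finset V} {a : ℕ}
    (hS : Saturated P S) (ha : ∀ B ∈ P.parts, #B = a) : #S = #(S.image P.part) * a := by
  rw [card_eq_sum_card_image P.part S]
  refine sum_const_nat fun B hB ↦ ?_
  obtain ⟨v, hv, rfl⟩ := mem_image.1 hB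
  have hfiber : {w ∈ S | P.part w = P.part v} = P.part v := by
    ext w
    rw [mem_filter, P.mem_part_iff_part_eq_part (mem_univ w) (mem_univ v)]
    refine and_iff_right_of_imp fun h ↦ hS v hv ?_
    rwa [P.mem_part_iff_part_eq_part (mem_univ w) (mem_univ v)]
  rw [hfiber, ha _ (P.part_mem.2 (mem_univ v))]

variable {A : Finset V}

lemma isBlock_of_smul_eq_of_inter_nonempty
    (h : ∀ φ : G ≃g G, ((φ • A) ∩ A).Nonempty → φ • A = A) :
    MulAction.IsBlock (G ≃g G) (A : Set V) := by
  rw [MulAction.isBlock_iff_smul_eq_of_nonempty]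
  intro φ hφ
  rw [← coe_smul_finset, coe_inj]
  exact h φ (by rwa [← coe_nonempty, coe_inter, coe_smul_finset])

variable [Fintype V] {P : Finpartition (univ : Finset V)}

variable (G) in
/-- A partition whose parts are the translates of a single part under the automorphisms of `G`. -/
def IsBlockPartition (P : Finpartition (univ : Finset V)) : Prop :=
  ∀ A ∈ P.parts, ∀ B, B ∈ P.parts ↔ ∃ φ : G ≃g G, B = φ • A

lemma IsBlockPartition.card_eq (hP : IsBlockPartition G P) {A B : Finset V} (hA : A ∈ P.parts)
    (hB : B ∈ P.parts) : #B = #A := by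
  obtain ⟨φ, rfl⟩ := (hP A hA B).1 hB
  exact card_smul_finset φ A

lemma exists_isBlockPartition_of_isBlock (hvt : VertexTransitive G) (hA : A.Nonempty)
    (hblock : MulAction.IsBlock (G ≃g G) (A : Set V)) :
    ∃ P : Finpartition (univ : Finset V), IsBlockPartition G P ∧ A ∈ P.parts := by
  classical
  have hdisj (v : V) : ∃! B, B ∈ ({B | ∃ φ : G ≃g G, B = φ • A} : Finset (Finset V)) ∧ v ∈ B := by
    obtain ⟨a, ha⟩ := hA
    obtain ⟨φ, rfl⟩ := hvt a v
    refine ⟨φ • A, ⟨mem_filter.2 ⟨mem_univ _, φ, rfl⟩, smul_mem_smul_finset ha⟩, ?_⟩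
    rintro _ ⟨hB, hv⟩
    obtain ⟨ψ, rfl⟩ := (mem_filter.1 hB).2
    rw [← coe_inj, coe_smul_finset, coe_smul_finset]
    refine MulAction.isBlock_iff_smul_eq_smul_of_nonempty.1 hblock ⟨φ a, ?_, ?_⟩
    · rwa [← coe_smul_finset]
    · exact Set.smul_mem_smul_set ha
  have hempty : ∅ ∉ ({B | ∃ φ : G ≃g G, B = φ • A} : Finset (Finset V)) := by
    intro hmem
    obtain ⟨φ, hφ⟩ := (mem_filter.1 hmem).2
    exact (smul_finset_nonempty.2 hA : (φ • A).Nonempty).ne_empty hφ.symm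
  have hmem (B : Finset V) :
      B ∈ ({B | ∃ φ : G ≃g G, B = φ • A} : Finset (Finset V)) ↔ ∃ φ : G ≃g G, B = φ • A := by
    simp
  refine ⟨.ofExistsUnique _ (fun B _ ↦ subset_univ B) (fun v _ ↦ hdisj v) hempty,
    fun B hB C ↦ ?_, (hmem A).2 ⟨1, (one_smul _ A).symm⟩⟩
  obtain ⟨φ, rfl⟩ := (hmem B).1 hB
  refine (hmem C).trans ⟨?_, ?_⟩
  · rintro ⟨ψ, rfl⟩
    exact ⟨ψ * φ⁻¹, by rw [smul_smul, inv_mul_cancel_right]⟩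
  · rintro ⟨ψ, rfl⟩
    exact ⟨ψ * φ, by rw [smul_smul]⟩

end Blocks

/-! ### Expansion of vertex sets -/

section Neighborhood

variable [Fintype V] [DecidableEq V] [DecidableRel G.Adj] {S T : Finset V} {k : ℕ}

variable (G) in
/-- The set `N(S)` of all vertices adjacent to a vertex of `S`; it may meet `S`. -/
def neighborhood (S : Finset V) : Finset V := S.biUnion fun v ↦ G.neighborFinset v

lemma mem_neighborhood {v : V} : v ∈ neighborhood G S ↔ ∃ u ∈ S, G.Adj u v := by
  simp [neighborhood]

lemma neighborhood_mono (h : S ⊆ T) : neighborhood G S ⊆ neighborhood G T :=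
  biUnion_subset_biUnion_of_subset_left _ h

lemma neighborhood_union (S T : Finset V) :
    neighborhood G (S ∪ T) = neighborhood G S ∪ neighborhood G T :=
  union_biUnion

lemma card_neighborhood_inter_add_card_neighborhood_union_le (S T : Finset V) :
    #(neighborhood G (S ∩ T)) + #(neighborhood G (S ∪ T)) ≤
      #(neighborhood G S) + #(neighborhood G T) := by
  rw [neighborhood_union, ← card_inter_add_card_union (neighborhood G S)]
  exact Nat.add_le_add_right (card_le_card (subset_inter (neighborhood_mono inter_subset_left)
    (neighborhood_mono inter_subset_right))) _

lemma neighborhood_smul (φ : G ≃g G) (S : Finset V) :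
    neighborhood G (φ • S) = φ • neighborhood G S := by
  ext v
  simp only [mem_neighborhood, mem_smul_finset]
  constructor
  · rintro ⟨_, ⟨u, hu, rfl⟩, huv⟩
    refine ⟨φ⁻¹ • v, ⟨u, hu, φ.map_adj_iff.1 ?_⟩, smul_inv_smul φ v⟩
    rwa [← RelIso.smul_def, ← RelIso.smul_def, smul_inv_smul]
  · rintro ⟨w, ⟨u, hu, huw⟩, rfl⟩
    exact ⟨φ • u, ⟨u, hu, rfl⟩, φ.map_adj_iff.2 huw⟩

lemma card_le_card_neighborhood (hk : 0 < k) (hreg : G.IsRegularOfDegree k) (S : Finset V) :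
    #S ≤ #(neighborhood G S) := by
  refine Nat.le_of_mul_le_mul_left ?_ hk
  rw [← card_interedges_univ hreg, ← card_interedges_univ hreg (neighborhood G S),
    card_interedges_comm S]
  refine card_le_card fun p hp ↦ ?_
  obtain ⟨-, hv, huv⟩ := G.mem_interedges_iff.1 hp
  exact G.mem_interedges_iff.2 ⟨mem_neighborhood.2 ⟨_, hv, huv.symm⟩, mem_univ _, huv⟩

lemma neighborhood_compl_neighborhood_subset (S : Finset V) :
    neighborhood G (neighborhood G S)ᶜ ⊆ Sᶜ := by
  intro v hv
  obtain ⟨u, hu, huv⟩ := mem_neighborhood.1 hv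
  rw [mem_compl] at hu ⊢
  exact fun hvS ↦ hu (mem_neighborhood.2 ⟨v, hvS, huv.symm⟩)

end Neighborhood

section Expansion

variable [Fintype V] [DecidableEq V] [DecidableRel G.Adj] {S A B : Finset V} {h k : ℕ}

variable (G h) in
/-- Every nonempty set that does not dominate the graph has at least `h` more neighbours than
elements. -/
def IsExpanding : Prop :=
  ∀ S : Finset V, S.Nonempty → neighborhood G S ≠ univ → #S + h ≤ #(neighborhood G S)

variable (G h) in
/-- A nonempty set that does not dominate the graph and has at most `h` more neighbours than
elements. In an expanding graph this is the case of equality. -/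
structure IsTight (S : Finset V) : Prop where
  nonempty : S.Nonempty
  neighborhood_ne_univ : neighborhood G S ≠ univ
  card_neighborhood_le : #(neighborhood G S) ≤ #S + h

lemma IsTight.compl_neighborhood (hS : IsTight G h S) : IsTight G h (neighborhood G S)ᶜ := by
  have hsub := neighborhood_compl_neighborhood_subset (G := G) S
  refine ⟨?_, ?_, ?_⟩
  · rw [nonempty_iff_ne_empty, Ne, compl_eq_empty_iff]
    exact hS.neighborhood_ne_univ
  · obtain ⟨v, hv⟩ := hS.nonempty
    exact fun heq ↦ mem_compl.1 (hsub (heq ▸ mem_univ v)) hv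
  · have := card_le_card hsub
    have := hS.card_neighborhood_le
    have := card_le_univ (neighborhood G S)
    have := card_le_univ S
    simp only [card_compl] at *
    omega

lemma IsTight.smul (hS : IsTight G h S) (φ : G ≃g G) : IsTight G h (φ • S) := by
  refine ⟨smul_finset_nonempty.2 hS.nonempty, fun heq ↦ hS.neighborhood_ne_univ ?_, ?_⟩
  · rw [neighborhood_smul, ← card_eq_iff_eq_univ, card_smul_finset] at heq
    exact (card_eq_iff_eq_univ _).1 heq
  · rw [neighborhood_smul, card_smul_finset, card_smul_finset]
    exact hS.card_neighborhood_le

variable (G h) in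
/-- A tight set of least cardinality in a graph whose optimal expansion is `h`. -/
structure IsExpansionAtom (A : Finset V) : Prop where
  isExpanding : IsExpanding G h
  isTight : IsTight G h A
  card_le_of_isTight : ∀ S, IsTight G h S → #A ≤ #S

lemma exists_isExpansionAtom [Nonempty V] (hk : 0 < k) (hreg : G.IsRegularOfDegree k) :
    ∃ (h : ℕ) (A : Finset V), IsExpansionAtom G h A := by
  classical
  let F : Finset (Finset V) := {S | S.Nonempty ∧ neighborhood G S ≠ univ}
  have hF : F.Nonempty := by
    obtain ⟨v⟩ := ‹Nonempty V›
    refine ⟨{v}, mem_filter.2 ⟨mem_univ _, singleton_nonempty v, fun heq ↦ ?_⟩⟩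
    have hv : v ∈ neighborhood G {v} := heq ▸ mem_univ v
    simp [mem_neighborhood] at hv
  obtain ⟨A, hA, hmin⟩ :=
    exists_min_image F (fun S ↦ toLex (#(neighborhood G S) - #S, #S)) hF
  have hle (S : Finset V) := card_le_card_neighborhood hk hreg S
  have hA' := (mem_filter.1 hA).2
  simp only [Prod.Lex.toLex_le_toLex] at hmin
  refine ⟨#(neighborhood G A) - #A, A, fun S hS hS' ↦ ?_, ⟨hA'.1, hA'.2, ?_⟩, fun S hS ↦ ?_⟩
  · have := hmin S (mem_filter.2 ⟨mem_univ _, hS, hS'⟩)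
    have := hle S
    omega
  · have := hle A
    omega
  · have := hmin S (mem_filter.2 ⟨mem_univ _, hS.nonempty, hS.neighborhood_ne_univ⟩)
    have := hle S
    have := hS.card_neighborhood_le
    omega

namespace IsExpansionAtom

lemma two_mul_card_add_le (hA : IsExpansionAtom G h A) : 2 * #A + h ≤ Fintype.card V := by
  have hdual := hA.card_le_of_isTight _ hA.isTight.compl_neighborhood
  have := hA.isExpanding A hA.isTight.nonempty hA.isTight.neighborhood_ne_univ
  rw [card_compl] at hdual
  have := card_pos.2 hA.isTight.nonempty
  omega

lemma smul_subset_of_isTight (hA : IsExpansionAtom G h A) (hS : IsTight G h S)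
    (hcard : #S + #A + h ≤ Fintype.card V) {φ : G ≃g G} (hφ : (φ • A ∩ S).Nonempty) :
    φ • A ⊆ S := by
  have hφA := (hA.isTight.smul φ).card_neighborhood_le
  have hsubmod := card_neighborhood_inter_add_card_neighborhood_union_le (G := G) (φ • A) S
  have hcards := card_inter_add_card_union (φ • A) S
  have hcardA : #(φ • A) = #A := card_smul_finset φ A
  have hS' := hS.card_neighborhood_le
  have hinter : neighborhood G (φ • A ∩ S) ≠ univ := fun heq ↦
    hS.neighborhood_ne_univ (univ_subset_iff.1 (heq ▸ neighborhood_mono inter_subset_right))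
  have hinter_exp := hA.isExpanding _ hφ hinter
  have hinter_pos := card_pos.2 hφ
  have hunion : neighborhood G (φ • A ∪ S) ≠ univ := by
    intro heq
    rw [heq, card_univ] at hsubmod
    omega
  have hunion_exp := hA.isExpanding _ (hS.nonempty.mono subset_union_right) hunion
  have hle := hA.card_le_of_isTight _ ⟨hφ, hinter, by omega⟩
  exact inter_eq_left.1 (eq_of_subset_of_card_le inter_subset_left (by omega))

lemma isBlock (hA : IsExpansionAtom G h A) : MulAction.IsBlock (G ≃g G) (A : Set V) := by
  refine isBlock_of_smul_eq_of_inter_nonempty fun φ hφ ↦ ?_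
  have hcard := hA.two_mul_card_add_le
  exact eq_of_subset_of_card_le
    (hA.smul_subset_of_isTight hA.isTight (by omega) hφ) (card_smul_finset φ A).ge

end IsExpansionAtom

end Expansion

section TwoColorings

lemma exists_isHamiltonianCycle_of_forall_ncard_neighborSet_eq_two [Finite V] [DecidableEq V]
    (hconn : G.Connected) (hdeg : ∀ v, (G.neighborSet v).ncard = 2) :
    ∃ (v : V) (p : G.Walk v v), p.IsHamiltonianCycle ∧
      ∀ x y, G.Adj x y → p.toSubgraph.Adj x y := by
  classical
  cases nonempty_fintype V
  have hcycles : G.IsCycles := fun v _ ↦ hdeg v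
  obtain ⟨v⟩ := hconn.nonempty
  obtain ⟨p, hp, hverts⟩ := hcycles.exists_cycle_toSubgraph_verts_eq_connectedComponentSupp
    (c := G.connectedComponentMk v) (v := v) ConnectedComponent.connectedComponentMk_mem
    (Set.nonempty_of_ncard_ne_zero (by rw [hdeg]; norm_num))
  have hmem (w : V) : w ∈ p.toSubgraph.verts := by
    rw [hverts]
    exact ConnectedComponent.sound (hconn.preconnected w v)
  refine ⟨v, p, Walk.isHamiltonianCycle_isCycle_and_isHamiltonian_tail.2 ⟨hp, ?_⟩,
    fun x y hxy ↦ (hp.adj_toSubgraph_iff_of_isCycles hcycles (hmem x) y).2 hxy⟩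
  refine hp.isPath_tail.isHamiltonian_of_mem fun w ↦ ?_
  have hw := p.mem_verts_toSubgraph.1 (hmem w)
  rw [Walk.support_tail_of_not_nil p hp.not_nil]
  rw [Walk.mem_support_iff] at hw
  rcases hw with rfl | hw
  · exact Walk.end_mem_tail_support hp.not_nil
  · exact hw

lemma two_colorable_of_forall_ncard_neighborSet_eq_two [Fintype V] (hconn : G.Connected)
    (hdeg : ∀ v, (G.neighborSet v).ncard = 2) (heven : Even (Fintype.card V)) :
    G.Colorable 2 := by
  classical
  obtain ⟨v, p, hp, hadj⟩ := exists_isHamiltonianCycle_of_forall_ncard_neighborSet_eq_two hconn hdeg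
  rw [← hp.length_eq] at heven
  have hpos := hp.isCycle.three_le_length
  have hloop : p.getVert 0 = p.getVert p.length := by simp
  have hparity {i j : ℕ} (hi : i ≤ p.length) (hj : j ≤ p.length) (hie : Even i) (hjo : Odd j) :
      p.getVert i ≠ p.getVert j := by
    intro hij
    obtain ⟨i', hi1, hi', hie', hii'⟩ :
        ∃ i', 1 ≤ i' ∧ i' ≤ p.length ∧ Even i' ∧ p.getVert i' = p.getVert i := by
      rcases i.eq_zero_or_pos with rfl | hipos
      · exact ⟨p.length, by omega, le_rfl, heven, hloop.symm⟩
      · exact ⟨i, hipos, hi, hie, rfl⟩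
    have := hp.isCycle.getVert_injOn ⟨hi1, hi'⟩ ⟨hjo.pos, hj⟩ (hii'.trans hij)
    exact Nat.not_even_iff_odd.2 hjo (this ▸ hie')
  refine IsBipartiteWith.isBipartite (s := {x | ∃ i ≤ p.length, Even i ∧ p.getVert i = x})
    (t := {x | ∃ i ≤ p.length, Odd i ∧ p.getVert i = x}) ⟨?_, fun x y hxy ↦ ?_⟩
  · rw [Set.disjoint_left]
    rintro _ ⟨i, hi, hie, rfl⟩ ⟨j, hj, hjo, hij⟩
    exact hparity hi hj hie hjo hij.symm
  · obtain ⟨i, hxy', hi⟩ := p.toSubgraph_adj_iff.1 (hadj x y hxy)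
    rcases Sym2.eq_iff.1 hxy' with ⟨rfl, rfl⟩ | ⟨rfl, rfl⟩ <;>
    rcases i.even_or_odd with hie | hio
    · exact .inl ⟨⟨i, hi.le, hie, rfl⟩, i + 1, hi, hie.add_one, rfl⟩
    · exact .inr ⟨⟨i, hi.le, hio, rfl⟩, i + 1, hi, hio.add_one, rfl⟩
    · exact .inr ⟨⟨i + 1, hi, hie.add_one, rfl⟩, i, hi.le, hie, rfl⟩
    · exact .inl ⟨⟨i + 1, hi, hio.add_one, rfl⟩, i, hi.le, hio, rfl⟩

variable [Fintype V] [DecidableEq V] [DecidableRel G.Adj] {S : Finset V} {a k : ℕ}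

lemma neighborhood_neighborhood_subset_of_card_le (hreg : G.IsRegularOfDegree k)
    (hcard : #(neighborhood G S) ≤ #S) : neighborhood G (neighborhood G S) ⊆ S := by
  have hsub : G.interedges S univ ⊆ G.interedges S (neighborhood G S) := by
    intro p hp
    obtain ⟨hu, -, huv⟩ := G.mem_interedges_iff.1 hp
    exact G.mem_interedges_iff.2 ⟨hu, mem_neighborhood.2 ⟨_, hu, huv⟩, huv⟩
  have heq : G.interedges (neighborhood G S) S = G.interedges (neighborhood G S) univ := by
    refine eq_of_subset_of_card_le (G.interedges_mono Subset.rfl (subset_univ S)) ?_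
    rw [card_interedges_univ hreg, card_interedges_comm]
    exact (Nat.mul_le_mul_left k hcard).trans
      ((card_interedges_univ hreg S).ge.trans (card_le_card hsub))
  intro v hv
  obtain ⟨u, hu, huv⟩ := mem_neighborhood.1 hv
  have hmem : (u, v) ∈ G.interedges (neighborhood G S) univ :=
    G.mk_mem_interedges_iff.2 ⟨hu, mem_univ v, huv⟩
  rw [← heq] at hmem
  exact (G.mk_mem_interedges_iff.1 hmem).2.1

lemma card_lt_card_neighborhood (hconn : G.Connected) (hnb : ¬ G.Colorable 2)
    (hreg : G.IsRegularOfDegree k) (hS : S.Nonempty) (hS' : neighborhood G S ≠ univ) :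
    #S < #(neighborhood G S) := by
  by_contra! hcard
  have hback := neighborhood_neighborhood_subset_of_card_le hreg hcard
  have hcover : S ∪ neighborhood G S = univ := by
    refine eq_univ_of_adj_closed hconn (hS.mono subset_union_left) fun u hu v huv ↦ ?_
    rcases mem_union.1 hu with hu | hu
    · exact mem_union_right _ (mem_neighborhood.2 ⟨u, hu, huv⟩)
    · exact mem_union_left _ (hback (mem_neighborhood.2 ⟨u, hu, huv⟩))
  have hdisj : Disjoint S (neighborhood G S) := by
    rw [disjoint_iff_inter_eq_empty, ← not_nonempty_iff_eq_empty]
    intro hne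
    have huniv := eq_univ_of_adj_closed hconn hne fun u hu v huv ↦ by
      obtain ⟨huS, huN⟩ := mem_inter.1 hu
      exact mem_inter.2 ⟨hback (mem_neighborhood.2 ⟨u, huN, huv⟩), mem_neighborhood.2 ⟨u, huS, huv⟩⟩
    exact hS' (univ_subset_iff.1 (huniv ▸ inter_subset_right))
  refine hnb (IsBipartiteWith.isBipartite (s := S) (t := neighborhood G S)
    ⟨disjoint_coe.2 hdisj, fun u v huv ↦ ?_⟩)
  rcases mem_union.1 (hcover ▸ mem_univ u) with hu | hu
  · exact .inl ⟨hu, mem_neighborhood.2 ⟨u, hu, huv⟩⟩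
  · exact .inr ⟨hu, hback (mem_neighborhood.2 ⟨u, hu, huv⟩)⟩

variable {P : Finpartition (univ : Finset V)}

lemma two_colorable_of_card_neighborhood_eq_two_mul (hconn : G.Connected)
    (heven : Even (Fintype.card V)) (ha : Odd a) (hcard : ∀ B ∈ P.parts, #B = a)
    (hsat : ∀ B ∈ P.parts, Saturated P (neighborhood G B))
    (hN : ∀ B ∈ P.parts, #(neighborhood G B) = 2 * a)
    (hdisj : ∀ B ∈ P.parts, Disjoint B (neighborhood G B)) : G.Colorable 2 := by
  let π : V → P.parts := fun v ↦ ⟨P.part v, P.part_mem.2 (mem_univ v)⟩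
  have hπ (v : V) : v ∈ (π v : Finset V) := P.mem_part (mem_univ v)
  have hπ_eq {v : V} {B : P.parts} (hv : v ∈ (B : Finset V)) : π v = B :=
    Subtype.ext (P.part_eq_of_mem B.2 hv)
  have hπ_ne {u v : V} (huv : G.Adj u v) : π u ≠ π v := fun heq ↦
    disjoint_left.1 (hdisj _ (π u).2) (heq ▸ hπ v) (mem_neighborhood.2 ⟨u, hπ u, huv⟩)
  have hπ_surj : Function.Surjective π := fun B ↦
    (P.nonempty_of_mem_parts B.2).imp fun v hv ↦ hπ_eq hv
  have hQconn : (G.map π).Connected := hconn.map (Hom.map π G hπ_ne) hπ_surj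
  refine Colorable.of_hom (Hom.map π G hπ_ne)
    (two_colorable_of_forall_ncard_neighborSet_eq_two hQconn (fun B ↦ ?_) ?_)
  · have hnbr : (G.map π).neighborSet B = (neighborhood G B).image π := by
      ext C
      simp only [mem_neighborSet, coe_image, Set.mem_image, mem_coe, mem_neighborhood]
      constructor
      · rintro ⟨-, u, v, huv, rfl, rfl⟩
        exact ⟨v, ⟨u, hπ u, huv⟩, rfl⟩
      · rintro ⟨v, ⟨u, hu, huv⟩, rfl⟩
        obtain rfl := hπ_eq hu
        exact ⟨hπ_ne huv, u, v, huv, rfl, rfl⟩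
    have himage : #((neighborhood G B).image π) = #((neighborhood G B).image P.part) := by
      rw [← card_image_of_injective _ Subtype.val_injective, image_image]
      rfl
    rw [hnbr, Set.ncard_coe_finset, himage]
    have := (hsat B B.2).card_eq hcard
    rw [hN B B.2] at this
    exact Nat.eq_of_mul_eq_mul_right ha.pos this.symm
  · have htotal := P.sum_card_parts
    rw [sum_const_nat hcard, card_univ] at htotal
    rw [← htotal, Nat.even_mul, or_iff_left (Nat.not_even_iff_odd.2 ha)] at heven
    rwa [Fintype.card_coe]

end TwoColorings

section ExpansionConstant

variable [Fintype V] [DecidableEq V] [DecidableRel G.Adj] {S A B : Finset V} {h k : ℕ}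
  {P : Finpartition (univ : Finset V)}

/-- In a connected graph, if the parts that meet their own neighbourhood were swallowed by it, then
the neighbourhood of a part would be closed under adjacency. -/
lemma IsBlockPartition.disjoint_neighborhood (hP : IsBlockPartition G P) (hconn : G.Connected)
    (hsat : ∀ B ∈ P.parts, Saturated P (neighborhood G B))
    (hN : ∀ B ∈ P.parts, #(neighborhood G B) = 2 * #B)
    (hN' : ∀ B ∈ P.parts, neighborhood G B ≠ univ) (hB : B ∈ P.parts) :
    Disjoint B (neighborhood G B) := by
  by_contra hB'
  obtain ⟨x, hxB, hxN⟩ := not_disjoint_iff.1 hB'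
  have hself : ∀ C ∈ P.parts, C ⊆ neighborhood G C := by
    intro C hC
    obtain ⟨φ, rfl⟩ := (hP B hB C).1 hC
    have hx : φ • x ∈ neighborhood G (φ • B) := by
      rw [neighborhood_smul]
      exact smul_mem_smul_finset hxN
    have := hsat _ hC _ hx
    rwa [P.part_eq_of_mem hC (smul_mem_smul_finset hxB)] at this
  obtain ⟨w, hwN, hwB⟩ : ∃ w ∈ neighborhood G B, w ∉ B := by
    refine exists_mem_notMem_of_card_lt_card ?_
    have := card_pos.2 ⟨x, hxB⟩
    rw [hN B hB]
    omega
  have hW : P.part w ∈ P.parts := P.part_mem.2 (mem_univ w)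
  have hw : w ∈ P.part w := P.mem_part (mem_univ w)
  have hdisj : Disjoint B (P.part w) := P.disjoint hB hW fun heq ↦ hwB (heq ▸ hw)
  have hcard : #(B ∪ P.part w) = 2 * #B := by
    rw [card_union_of_disjoint hdisj, hP.card_eq hB hW, two_mul]
  have hNB : B ∪ P.part w = neighborhood G B := by
    refine eq_of_subset_of_card_le (union_subset (hself B hB) (hsat B hB w hwN)) ?_
    rw [hcard, hN B hB]
  have hNW : B ∪ P.part w = neighborhood G (P.part w) := by
    obtain ⟨u, hu, huw⟩ := mem_neighborhood.1 hwN
    have hBW := hsat _ hW u (mem_neighborhood.2 ⟨w, hw, huw.symm⟩)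
    rw [P.part_eq_of_mem hB hu] at hBW
    refine eq_of_subset_of_card_le (union_subset hBW (hself _ hW)) ?_
    rw [hcard, hN _ hW, hP.card_eq hB hW]
  refine hN' B hB (hNB ▸ eq_univ_of_adj_closed hconn ⟨x, mem_union_left _ hxB⟩ fun u hu v huv ↦ ?_)
  rcases mem_union.1 hu with hu | hu
  · exact hNB ▸ mem_neighborhood.2 ⟨u, hu, huv⟩
  · exact hNW ▸ mem_neighborhood.2 ⟨u, hu, huv⟩

namespace IsExpansionAtom

lemma card_neighborhood (hA : IsExpansionAtom G h A) : #(neighborhood G A) = #A + h :=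
  hA.isTight.card_neighborhood_le.antisymm
    (hA.isExpanding A hA.isTight.nonempty hA.isTight.neighborhood_ne_univ)

lemma of_mem_parts (hA : IsExpansionAtom G h A) (hP : IsBlockPartition G P) (hAP : A ∈ P.parts)
    (hB : B ∈ P.parts) : IsExpansionAtom G h B := by
  obtain ⟨φ, rfl⟩ := (hP A hAP B).1 hB
  refine ⟨hA.isExpanding, hA.isTight.smul φ, fun S hS ↦ ?_⟩
  rw [card_smul_finset]
  exact hA.card_le_of_isTight S hS

lemma saturated_of_isTight (hA : IsExpansionAtom G h A) (hP : IsBlockPartition G P)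
    (hAP : A ∈ P.parts) (hS : IsTight G h S) (hcard : #S + #A + h ≤ Fintype.card V) :
    Saturated P S := by
  intro v hv
  obtain ⟨φ, hφ⟩ := (hP A hAP _).1 (P.part_mem.2 (mem_univ v))
  rw [hφ]
  exact hA.smul_subset_of_isTight hS hcard ⟨v, mem_inter.2 ⟨hφ ▸ P.mem_part (mem_univ v), hv⟩⟩

lemma saturated_neighborhood (hA : IsExpansionAtom G h A) (hP : IsBlockPartition G P)
    (hAP : A ∈ P.parts) : Saturated P (neighborhood G A) := by
  rw [← compl_compl (neighborhood G A)]
  refine (hA.saturated_of_isTight hP hAP hA.isTight.compl_neighborhood ?_).compl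
  have := card_le_univ (neighborhood G A)
  have := hA.card_neighborhood
  rw [card_compl]
  omega

lemma card_dvd (hA : IsExpansionAtom G h A) (hP : IsBlockPartition G P) (hAP : A ∈ P.parts) :
    #A ∣ h := by
  have hdvd := Dvd.intro_left _
    ((hA.saturated_neighborhood hP hAP).card_eq fun B hB ↦ hP.card_eq hAP hB).symm
  rwa [hA.card_neighborhood, Nat.dvd_add_right dvd_rfl] at hdvd

lemma le_card_add (hA : IsExpansionAtom G h A) (hreg : G.IsRegularOfDegree k) : k ≤ #A + h := by
  obtain ⟨v, hv⟩ := hA.isTight.nonempty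
  rw [← hA.card_neighborhood, ← hreg v, ← G.card_neighborFinset_eq_degree]
  exact card_le_card fun w hw ↦ mem_neighborhood.2 ⟨v, hv, (G.mem_neighborFinset v w).1 hw⟩

lemma two_colorable_of_card_eq (hA : IsExpansionAtom G h A) (hP : IsBlockPartition G P)
    (hAP : A ∈ P.parts) (hconn : G.Connected) (heven : Even (Fintype.card V)) (hodd : Odd h)
    (hcard : #A = h) : G.Colorable 2 := by
  have hatom {B : Finset V} (hB : B ∈ P.parts) := hA.of_mem_parts hP hAP hB
  have hcard' {B : Finset V} (hB : B ∈ P.parts) : #B = h := (hP.card_eq hAP hB).trans hcard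
  have hsat (B : Finset V) (hB : B ∈ P.parts) := (hatom hB).saturated_neighborhood hP hB
  have hN (B : Finset V) (hB : B ∈ P.parts) : #(neighborhood G B) = 2 * #B := by
    rw [(hatom hB).card_neighborhood, hcard' hB, two_mul]
  exact two_colorable_of_card_neighborhood_eq_two_mul hconn heven hodd (fun _ ↦ hcard') hsat
    (fun B hB ↦ (hN B hB).trans (congrArg _ (hcard' hB))) fun _ ↦
      hP.disjoint_neighborhood hconn hsat hN fun _ hB ↦ (hatom hB).isTight.neighborhood_ne_univ

lemma four_le (hA : IsExpansionAtom G h A) (hP : IsBlockPartition G P) (hAP : A ∈ P.parts)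
    (hconn : G.Connected) (hnb : ¬ G.Colorable 2) (heven : Even (Fintype.card V))
    (hreg : G.IsRegularOfDegree k) (hk : 5 ≤ k) : 4 ≤ h := by
  have hpos : 0 < h := by
    have := card_lt_card_neighborhood hconn hnb hreg hA.isTight.nonempty
      hA.isTight.neighborhood_ne_univ
    rw [hA.card_neighborhood] at this
    omega
  by_contra! hlt
  have hdvd := hA.card_dvd hP hAP
  have hle := Nat.le_of_dvd hpos hdvd
  have hkA := hA.le_card_add hreg
  obtain ⟨hA3, rfl⟩ : #A = 3 ∧ h = 3 := by
    interval_cases h <;> interval_cases #A <;> omega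
  exact hnb (hA.two_colorable_of_card_eq hP hAP hconn heven (by decide) hA3)

end IsExpansionAtom

lemma isExpanding_four (hconn : G.Connected) (hvt : VertexTransitive G) (hnb : ¬ G.Colorable 2)
    (heven : Even (Fintype.card V)) (hreg : G.IsRegularOfDegree k) (hk : 5 ≤ k) :
    IsExpanding G 4 := by
  have := hconn.nonempty
  obtain ⟨h, A, hA⟩ := exists_isExpansionAtom (by omega : 0 < k) hreg
  obtain ⟨P, hP, hAP⟩ := exists_isBlockPartition_of_isBlock hvt hA.isTight.nonempty hA.isBlock
  have hh := hA.four_le hP hAP hconn hnb heven hreg hk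
  exact fun S hS hS' ↦ (Nat.add_le_add_left hh _).trans (hA.isExpanding S hS hS')

lemma IsTight.even_card (hconn : G.Connected) (hvt : VertexTransitive G)
    (hnb : ¬ G.Colorable 2) (heven : Even (Fintype.card V)) (hreg : G.IsRegularOfDegree k)
    (hk : 6 ≤ k) (hS : IsTight G 4 S) (hcard : #S + 8 ≤ Fintype.card V) : Even #S := by
  have := hconn.nonempty
  obtain ⟨h, A, hA⟩ := exists_isExpansionAtom (by omega : 0 < k) hreg
  obtain ⟨P, hP, hAP⟩ := exists_isBlockPartition_of_isBlock hvt hA.isTight.nonempty hA.isBlock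
  have hle := hA.four_le hP hAP hconn hnb heven hreg (by omega)
  have hexp := hA.isExpanding S hS.nonempty hS.neighborhood_ne_univ
  obtain rfl : h = 4 := by
    have := hS.card_neighborhood_le
    omega
  have hdvd := hA.card_dvd hP hAP
  have hA4 := Nat.le_of_dvd (by norm_num) hdvd
  have hkA := hA.le_card_add hreg
  have hA2 : 2 ∣ #A := by interval_cases #A <;> omega
  have hsat := hA.saturated_of_isTight hP hAP hS (by omega)
  exact even_iff_two_dvd.2
    (hA2.trans (Dvd.intro_left _ (hsat.card_eq fun B hB ↦ hP.card_eq hAP hB).symm))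

end ExpansionConstant

/-! ### Small edge cuts -/

section EdgeCuts

variable [Fintype V] [DecidableEq V] [DecidableRel G.Adj] {A Z : Finset V} {k : ℕ}

variable (G) in
/-- A smallest set among those achieving the minimum edge cut that leaves at least two vertices on
each side. -/
structure IsCutAtom (A : Finset V) : Prop where
  two_le_card : 2 ≤ #A
  card_add_two_le : #A + 2 ≤ Fintype.card V
  cutSize_le : ∀ Z, 2 ≤ #Z → #Z + 2 ≤ Fintype.card V → cutSize G A ≤ cutSize G Z
  card_le_of_cutSize_le :
    ∀ Z, 2 ≤ #Z → #Z + 2 ≤ Fintype.card V → cutSize G Z ≤ cutSize G A → #A ≤ #Z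

lemma exists_isCutAtom (hcard : 4 ≤ Fintype.card V) : ∃ A, IsCutAtom G A := by
  obtain ⟨S, -, hS⟩ := exists_subset_card_eq (s := (univ : Finset V)) (n := 2)
    (by rw [card_univ]; omega)
  obtain ⟨A, hA, hmin⟩ := exists_min_image
    ({Z | 2 ≤ #Z ∧ #Z + 2 ≤ Fintype.card V} : Finset (Finset V))
    (fun Z ↦ toLex (cutSize G Z, #Z)) ⟨S, mem_filter.2 ⟨mem_univ S, by omega, by omega⟩⟩
  simp only [mem_filter_univ, Prod.Lex.toLex_le_toLex] at hA hmin
  refine ⟨A, hA.1, hA.2, fun Z h2 hn ↦ ?_, fun Z h2 hn hle ↦ ?_⟩ <;>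
    have := hmin Z ⟨h2, hn⟩ <;> omega

namespace IsCutAtom

lemma two_mul_card_le (hA : IsCutAtom G A) : 2 * #A ≤ Fintype.card V := by
  have h2 := hA.two_le_card
  have hn := hA.card_add_two_le
  have hcompl := card_add_card_compl A
  have := hA.card_le_of_cutSize_le Aᶜ (by omega) (by omega) (cutSize_compl A).le
  omega

lemma three_le_card (hA : IsCutAtom G A) (hreg : G.IsRegularOfDegree k)
    (hcut : cutSize G A + 2 < 2 * k) : 3 ≤ #A := by
  by_contra! h
  have := mul_card_add_card_le_cutSize_add hreg A
  rw [(by have := hA.two_le_card; omega : #A = 2)] at this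
  omega

/-- Uncrossing a translate: two common vertices contradict submodularity, and a single one
contradicts posimodularity. -/
lemma isBlock (hA : IsCutAtom G A) (h3 : 3 ≤ #A) : MulAction.IsBlock (G ≃g G) (A : Set V) := by
  refine isBlock_of_smul_eq_of_inter_nonempty fun φ hφ ↦ ?_
  by_contra hne
  have hcardφ : #(φ • A) = #A := card_smul_finset φ A
  have hcutφ : cutSize G (φ • A) = cutSize G A := cutSize_smul φ A
  have hinter_pos := card_pos.2 hφ
  have hinter_lt : #(φ • A ∩ A) < #A := by
    by_contra! hge
    have hsub := inter_eq_right.1 (eq_of_subset_of_card_le inter_subset_right hge)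
    exact hne (eq_of_subset_of_card_le hsub hcardφ.le).symm
  have hunion := card_union_add_card_inter (φ • A) A
  have hhalf := hA.two_mul_card_le
  by_cases hinter : 2 ≤ #(φ • A ∩ A)
  · have := hA.cutSize_le (φ • A ∪ A) (by omega) (by omega)
    have := cutSize_inter_add_cutSize_union_le (G := G) (φ • A) A
    have := hA.card_le_of_cutSize_le (φ • A ∩ A) hinter (by omega) (by omega)
    omega
  · have hdiff := card_sdiff_add_card_inter (φ • A) A
    have hdiff' := card_sdiff_add_card_inter A (φ • A)
    rw [inter_comm] at hdiff'
    have := hA.cutSize_le (A \ φ • A) (by omega) (by omega)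
    have := cutSize_sdiff_add_cutSize_sdiff_le (G := G) (φ • A) A
    have := hA.card_le_of_cutSize_le (φ • A \ A) (by omega) (by omega) (by omega)
    omega

end IsCutAtom

lemma le_cutSize_of_forall_two_le_card (hreg : G.IsRegularOfDegree k)
    (hcut : ∀ Z : Finset V, 2 ≤ #Z → #Z + 2 ≤ Fintype.card V → k ≤ cutSize G Z)
    (hZ : Z.Nonempty) (hZ' : Z ≠ univ) : k ≤ cutSize G Z := by
  have hpos := card_pos.2 hZ
  have hpos' := card_pos.2 (nonempty_iff_ne_empty.2 (compl_eq_empty_iff Z |>.not.2 hZ'))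
  have hcompl := card_add_card_compl Z
  have hbound := mul_card_add_card_le_cutSize_add hreg Z
  have hbound' := mul_card_add_card_le_cutSize_add hreg Zᶜ
  rw [cutSize_compl] at hbound'
  by_cases h1 : #Z = 1
  · rw [h1] at hbound
    omega
  by_cases h1' : #Zᶜ = 1
  · rw [h1'] at hbound'
    omega
  exact hcut Z (by omega) (by omega)

variable {P : Finpartition (univ : Finset V)} {o : V → V}

variable (G) in
/-- A partition in which every vertex `v` has exactly one neighbour outside its own part, namely
`o v`. -/
def IsMatchedPartition (P : Finpartition (univ : Finset V)) (o : V → V) : Prop :=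
  ∀ v w, G.Adj v w ∧ w ∉ P.part v ↔ w = o v

lemma exists_isMatchedPartition (h : ∀ v, #(G.interedges {v} (P.part v)ᶜ) = 1) :
    ∃ o, IsMatchedPartition G P o := by
  have hone (v : V) : ∃ w, {w ∈ (P.part v)ᶜ | G.Adj v w} = {w} := by
    rw [← card_eq_one, ← card_interedges_singleton_left, h]
  choose o ho using hone
  refine ⟨o, fun v w ↦ ?_⟩
  rw [← mem_singleton, ← ho v, mem_filter, mem_compl, and_comm]

lemma IsBlockPartition.card_interedges_compl_part (hP : IsBlockPartition G P)
    (hvt : VertexTransitive G) (u v : V) :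
    #(G.interedges {u} (P.part u)ᶜ) = #(G.interedges {v} (P.part v)ᶜ) := by
  obtain ⟨φ, rfl⟩ := hvt u v
  have hmem : φ • P.part u ∈ P.parts := (hP _ (P.part_mem.2 (mem_univ u)) _).2 ⟨φ, rfl⟩
  have hpart : P.part (φ u) = φ • P.part u :=
    P.part_eq_of_mem hmem (smul_mem_smul_finset (P.mem_part (mem_univ u)))
  rw [hpart, ← smul_compl, ← RelIso.smul_def, ← smul_finset_singleton, card_interedges_smul]

lemma add_one_le_card_add_card_interedges_compl (hreg : G.IsRegularOfDegree k) {v : V}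
    (hv : v ∈ Z) : k + 1 ≤ #Z + #(G.interedges {v} Zᶜ) := by
  have hsplit := card_interedges_add_card_interedges_compl hreg {v} Z
  rw [card_singleton, card_interedges_singleton_left v Z] at hsplit
  have hin : {w ∈ Z | G.Adj v w} ⊆ Z.erase v := fun w hw ↦
    mem_erase.2 ⟨(mem_filter.1 hw).2.ne', (mem_filter.1 hw).1⟩
  have hle := card_le_card hin
  rw [card_erase_of_mem hv] at hle
  have := card_pos.2 ⟨v, hv⟩
  omega

lemma cutSize_eq_card_mul {r : ℕ} (h : ∀ v, #(G.interedges {v} (P.part v)ᶜ) = r)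
    (hA : A ∈ P.parts) : cutSize G A = #A * r := by
  rw [cutSize, card_interedges_eq_sum, sum_const_nat fun v hv ↦ ?_]
  rw [← h v, P.part_eq_of_mem hA hv]

lemma IsCutAtom.card_interedges_compl_part_eq_one (hA : IsCutAtom G A) (hP : IsBlockPartition G P)
    (hAP : A ∈ P.parts) (hconn : G.Connected) (hvt : VertexTransitive G)
    (hreg : G.IsRegularOfDegree k) (hcut : cutSize G A + 2 < 2 * k) (v : V) :
    #(G.interedges {v} (P.part v)ᶜ) = 1 := by
  obtain ⟨u, hu⟩ := P.nonempty_of_mem_parts hAP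
  obtain ⟨r, hr⟩ : ∃ r, ∀ v, #(G.interedges {v} (P.part v)ᶜ) = r :=
    ⟨_, fun v ↦ hP.card_interedges_compl_part hvt v u⟩
  have hcutA := cutSize_eq_card_mul hr hAP
  have hdeg := add_one_le_card_add_card_interedges_compl hreg hu
  rw [← P.part_eq_of_mem hAP hu, hr, P.part_eq_of_mem hAP hu] at hdeg
  have hpos : 0 < cutSize G A := cutSize_pos hconn ⟨u, hu⟩ fun heq ↦ by
    have := hA.card_add_two_le
    rw [heq, card_univ] at this
    omega
  have hr0 : r ≠ 0 := by
    rintro rfl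
    omega
  have hr2 : r < 2 := by
    by_contra! hr2
    obtain ⟨s, hs⟩ := Nat.exists_eq_add_of_le hA.two_le_card
    obtain ⟨t, rfl⟩ := Nat.exists_eq_add_of_le hr2
    have hexpand : (2 + s) * (2 + t) = 2 * s + 2 * t + 4 + s * t := by ring
    rw [hs] at hcutA hdeg
    omega
  rw [hr]
  omega

lemma two_mul_le_cutSize_add_two_or_exists_isMatchedPartition (hconn : G.Connected)
    (hvt : VertexTransitive G) (hreg : G.IsRegularOfDegree k) :
    (∀ Z : Finset V, 2 ≤ #Z → #Z + 2 ≤ Fintype.card V → 2 * k ≤ cutSize G Z + 2) ∨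
    ∃ P o, IsMatchedPartition G P o ∧ (∀ B ∈ P.parts, #B + 3 ≤ 2 * k) ∧
      ∀ Z : Finset V, Z.Nonempty → Z ≠ univ → k ≤ cutSize G Z := by
  by_contra! h
  obtain ⟨⟨Z, hZ, hZn, hZcut⟩, h⟩ := h
  obtain ⟨A, hA⟩ := exists_isCutAtom (G := G) (by omega)
  have hcut : cutSize G A + 2 < 2 * k := by
    have := hA.cutSize_le Z hZ hZn
    omega
  have hAblock := hA.isBlock (hA.three_le_card hreg hcut)
  have hAne : A.Nonempty := card_pos.1 (by have := hA.two_le_card; omega)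
  obtain ⟨P, hP, hAP⟩ := exists_isBlockPartition_of_isBlock hvt hAne hAblock
  have hout := hA.card_interedges_compl_part_eq_one hP hAP hconn hvt hreg hcut
  obtain ⟨o, ho⟩ := exists_isMatchedPartition hout
  have hcutA : cutSize G A = #A := by rw [cutSize_eq_card_mul hout hAP, mul_one]
  have hkA : k ≤ cutSize G A := by
    obtain ⟨v, hv⟩ := hAne
    have hdeg := add_one_le_card_add_card_interedges_compl hreg hv
    rw [← P.part_eq_of_mem hAP hv, hout, P.part_eq_of_mem hAP hv] at hdeg
    omega
  obtain ⟨Z, hZ, hZ', hlt⟩ := h P o ho fun B hB ↦ by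
    rw [hP.card_eq hAP hB]
    omega
  exact hlt.not_ge (le_cutSize_of_forall_two_le_card hreg
    (fun Z h2 hn ↦ hkA.trans (hA.cutSize_le Z h2 hn)) hZ hZ')

end EdgeCuts

/-! ### Barriers of non-extendable matchings -/

section Matchings

lemma ncard_verts_of_isMatching [Finite V] {M : G.Subgraph} (hM : M.IsMatching) :
    M.verts.ncard = 2 * M.edgeSet.ncard := by
  classical
  cases nonempty_fintype V
  have hedges : M.edgeSet.ncard = #M.coe.edgeFinset := by
    rw [← M.image_coe_edgeSet_coe, Set.ncard_image_of_injective _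
      (Sym2.map.injective Subtype.val_injective), ← coe_edgeFinset, Set.ncard_coe_finset]
  rw [hedges, ← M.coe.sum_degrees_eq_twice_card_edges, ← Nat.card_coe_set_eq,
    Nat.card_eq_fintype_card, Fintype.card_eq_sum_ones]
  refine sum_congr rfl fun v _ ↦ ?_
  rw [M.coe_degree]
  convert (Subgraph.isMatching_iff_forall_degree.1 hM v v.2).symm

lemma exists_isMatching_ncard_edgeSet_eq [Fintype V] [Nonempty V] [DecidableRel G.Adj] (q : ℕ)
    (h : ∀ v, 2 * q ≤ G.degree v + 1) :
    ∃ M : G.Subgraph, M.IsMatching ∧ M.edgeSet.ncard = q := by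
  classical
  induction q with
  | zero => exact ⟨⊥, fun v hv ↦ hv.elim, by simp⟩
  | succ q ih =>
    obtain ⟨M, hM, hMq⟩ := ih fun v ↦ (by omega : 2 * q ≤ 2 * (q + 1)).trans (h v)
    have hverts : #M.verts.toFinset = 2 * q := by
      rw [← hMq, ← ncard_verts_of_isMatching hM, Set.ncard_eq_toFinset_card']
    obtain ⟨v, -, hv⟩ : ∃ v ∈ univ, v ∉ M.verts.toFinset := by
      obtain ⟨u⟩ := ‹Nonempty V›
      refine exists_mem_notMem_of_card_lt_card ?_
      have := G.degree_lt_card_verts u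
      have := h u
      rw [card_univ]
      omega
    obtain ⟨w, hvw, hw⟩ : ∃ w ∈ G.neighborFinset v, w ∉ M.verts.toFinset := by
      refine exists_mem_notMem_of_card_lt_card ?_
      have := h v
      rw [G.card_neighborFinset_eq_degree]
      omega
    rw [mem_neighborFinset] at hvw
    rw [Set.mem_toFinset] at hv hw
    have hdisj : Disjoint M.support (G.subgraphOfAdj hvw).support := by
      rw [hM.support_eq_verts, support_subgraphOfAdj, Set.disjoint_right]
      rintro _ (rfl | rfl)
      exacts [hv, hw]
    refine ⟨_, hM.sup (.subgraphOfAdj hvw) hdisj, ?_⟩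
    have hvw' : s(v, w) ∉ M.edgeSet := fun hmem ↦ hv (M.edge_vert hmem)
    rw [Subgraph.edgeSet_sup, edgeSet_subgraphOfAdj, Set.union_singleton,
      Set.ncard_insert_of_notMem hvw', hMq]

lemma exists_isPerfectMatching_ge {M : G.Subgraph} (hM : M.IsMatching)
    {N : (G.induce M.vertsᶜ).Subgraph} (hN : N.IsPerfectMatching) :
    ∃ P : G.Subgraph, P.IsPerfectMatching ∧ M ≤ P := by
  let f : G.induce M.vertsᶜ →g G := (Embedding.induce _).toHom
  have hNf : (N.map f).IsMatching := hN.1.map f Subtype.val_injective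
  refine ⟨M ⊔ N.map f, ⟨hM.sup hNf ?_, fun v ↦ ?_⟩, le_sup_left⟩
  · rw [hM.support_eq_verts, hNf.support_eq_verts, Set.disjoint_left]
    rintro _ hv ⟨w, -, rfl⟩
    exact w.2 hv
  · by_cases hv : v ∈ M.verts
    · exact .inl hv
    · exact .inr ⟨⟨v, hv⟩, hN.2 _, rfl⟩

lemma ncard_verts_le_card_interedges [DecidableRel G.Adj] {X : Finset V} {M : G.Subgraph}
    (hM : M.IsMatching) (hX : M.verts ⊆ X) :
    M.verts.ncard ≤ #(G.interedges X X) := by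
  rw [← Set.ncard_coe_finset]
  have : M.verts ⊆ Prod.fst '' (G.interedges X X : Set (V × V)) := by
    intro v hv
    obtain ⟨w, hvw, -⟩ := hM hv
    exact ⟨(v, w), G.mk_mem_interedges_iff.2 ⟨hX hv, hX (M.edge_vert hvw.symm), hvw.adj_sub⟩, rfl⟩
  exact (Set.ncard_le_ncard this).trans (Set.ncard_image_le (Set.toFinite _))

end Matchings

section OddBarriers

variable [Fintype V] [DecidableEq V] [DecidableRel G.Adj] {X : Finset V}
  {K : Finset (Finset V)}

variable (G) in
/-- The members of `K` are odd unions of components of `G - X`, pairwise disjoint. Apart from the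
surplus of `#K` over `#X` this is the obstruction in Tutte's theorem; even components of `G - X` do
not appear in `K`. -/
structure IsOddBarrier (X : Finset V) (K : Finset (Finset V)) : Prop where
  pairwiseDisjoint : (K : Set (Finset V)).PairwiseDisjoint id
  odd_card : ∀ C ∈ K, Odd #C
  disjoint : ∀ C ∈ K, Disjoint X C
  neighborhood_subset : ∀ C ∈ K, neighborhood G C ⊆ X ∪ C

lemma exists_isOddBarrier_of_embedding {W : Type*} [Finite W] {H : SimpleGraph W} (f : H ↪g G)
    (hX : ∀ v, v ∈ X ↔ v ∉ Set.range f) :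
    ∃ K, IsOddBarrier G X K ∧ #K = H.oddComponents.ncard := by
  classical
  cases nonempty_fintype W
  have := Fintype.ofFinite H.ConnectedComponent
  let g : H.ConnectedComponent → Finset V := fun c ↦ c.supp.toFinset.map f.toEmbedding
  have hmem {v : V} {c : H.ConnectedComponent} :
      v ∈ g c ↔ ∃ w, H.connectedComponentMk w = c ∧ f w = v := by simp [g]
  have hg : Function.Injective g := fun c d hcd ↦
    ConnectedComponent.supp_injective (Set.toFinset_inj.1 (map_injective _ hcd))
  refine ⟨H.oddComponents.toFinset.image g, ⟨?_, forall_mem_image.2 fun c hc ↦ ?_,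
    forall_mem_image.2 fun c _ ↦ ?_, forall_mem_image.2 fun c _ v hv ↦ ?_⟩, ?_⟩
  · rw [coe_image, Set.InjOn.pairwiseDisjoint_image hg.injOn]
    intro c _ d _ hcd
    simp only [Function.comp, id_eq, Function.onFun, Finset.disjoint_left, hmem]
    rintro _ ⟨w, hw, rfl⟩ ⟨w', hw', hww'⟩
    exact hcd (by rw [← hw, ← hw', f.injective hww'])
  · rw [card_map, ← Set.ncard_eq_toFinset_card']
    exact (Set.mem_toFinset (s := H.oddComponents)).1 hc
  · rw [Finset.disjoint_left]
    intro v hvX hv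
    obtain ⟨w, -, rfl⟩ := hmem.1 hv
    exact (hX _).1 hvX ⟨w, rfl⟩
  · obtain ⟨u, hu, huv⟩ := mem_neighborhood.1 hv
    obtain ⟨w, hw, rfl⟩ := hmem.1 hu
    rw [mem_union, hX, or_iff_not_imp_left, not_not]
    rintro ⟨w', rfl⟩
    refine hmem.2 ⟨w', ?_, rfl⟩
    rw [← hw]
    exact ConnectedComponent.sound (f.map_adj_iff.1 huv).reachable.symm
  · rw [card_image_of_injective _ hg, ← Set.ncard_eq_toFinset_card']

lemma exists_isOddBarrier_of_isTutteViolator {W : Type*} [Fintype W] {H : SimpleGraph W}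
    (f : H ↪g G) {u : Set W} (hu : H.IsTutteViolator u) (heven : Even (Fintype.card W)) :
    ∃ X K, IsOddBarrier G X K ∧ (∀ v, v ∉ Set.range f → v ∈ X) ∧
      #X + Fintype.card W + 2 ≤ #K + Fintype.card V := by
  classical
  set D := (⊤ : H.Subgraph).deleteVerts u
  let g : D.coe ↪g G := f.comp <| Subgraph.topIso.toEmbedding.comp <|
    (Embedding.induce _).comp (Subgraph.coeDeleteVertsIso u).toEmbedding
  obtain ⟨K, hK, hcard⟩ := exists_isOddBarrier_of_embedding g (X := {v | v ∉ Set.range g}) (by simp)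
  refine ⟨_, K, hK, ?_, ?_⟩
  · intro v hv
    rw [mem_filter_univ]
    rintro ⟨w, rfl⟩
    exact hv ⟨_, rfl⟩
  · have hrange : #{v | v ∈ Set.range g} = D.verts.ncard := by
      rw [← Nat.card_coe_set_eq, Nat.card_congr (Equiv.ofInjective g g.injective),
        Nat.card_eq_fintype_card, Fintype.card_subtype]
    have hcompl : #{v | v ∈ Set.range g} + #{v | v ∉ Set.range g} = Fintype.card V :=
      card_filter_add_card_filter_not _
    have hverts : D.verts.ncard + u.ncard = Fintype.card W := by
      rw [Subgraph.deleteVerts_verts, Subgraph.verts_top, Set.ncard_sdiff_add_ncard_of_subset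
        u.subset_univ, Set.ncard_univ, Nat.card_eq_fintype_card]
    have hparity := D.coe.odd_ncard_oddComponents
    rw [Nat.card_coe_set_eq] at hparity
    have hviol : u.ncard < D.coe.oddComponents.ncard := hu
    rw [Nat.odd_iff, Nat.odd_iff] at hparity
    rw [Nat.even_iff] at heven
    omega

lemma exists_isOddBarrier_of_not_exists_isPerfectMatching_ge (heven : Even (Fintype.card V))
    {M : G.Subgraph} (hM : M.IsMatching)
    (hno : ¬ ∃ P : G.Subgraph, P.IsPerfectMatching ∧ M ≤ P) :
    ∃ X K, IsOddBarrier G X K ∧ M.verts ⊆ X ∧ #X + 2 ≤ #K + M.verts.ncard := by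
  classical
  obtain ⟨u, hu⟩ : ∃ u, (G.induce M.vertsᶜ).IsTutteViolator u := by
    by_contra! htutte
    obtain ⟨N, hN⟩ := tutte.2 htutte
    exact hno (exists_isPerfectMatching_ge hM hN)
  have hcard : M.verts.ncard + Fintype.card ↑M.vertsᶜ = Fintype.card V := by
    rw [← Nat.card_eq_fintype_card, Nat.card_coe_set_eq, Set.ncard_add_ncard_compl,
      Nat.card_eq_fintype_card]
  have hverts : Even M.verts.ncard := ncard_verts_of_isMatching hM ▸ even_two_mul _
  obtain ⟨X, K, hK, hX, hXK⟩ := exists_isOddBarrier_of_isTutteViolator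
    (Embedding.induce M.vertsᶜ) hu ((Nat.even_add.1 (hcard ▸ heven)).1 hverts)
  refine ⟨X, K, hK, fun v hv ↦ hX v ?_, by omega⟩
  rintro ⟨w, rfl⟩
  exact w.2 hv

end OddBarriers

section LargeCuts

variable [Fintype V] [DecidableEq V] [DecidableRel G.Adj] {X C D S : Finset V}
  {K : Finset (Finset V)} {d h k : ℕ}

/-- The vertices that form a singleton member of `K`. -/
def isolated (K : Finset (Finset V)) : Finset V := {C ∈ K | #C = 1}.biUnion id

namespace IsOddBarrier

lemma nonempty (hK : IsOddBarrier G X K) (hC : C ∈ K) : C.Nonempty :=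
  card_pos.1 (hK.odd_card C hC).pos

lemma ne_univ_of_disjoint (hK : IsOddBarrier G X K) (hC : C ∈ K) (h : Disjoint S C) :
    S ≠ univ := by
  rintro rfl
  obtain ⟨v, hv⟩ := hK.nonempty hC
  exact Finset.disjoint_left.1 h (mem_univ v) hv

lemma card_isolated (hK : IsOddBarrier G X K) : #(isolated K) = #{C ∈ K | #C = 1} := by
  rw [isolated, card_biUnion (hK.pairwiseDisjoint.subset (filter_subset _ _)), card_eq_sum_ones]
  exact sum_congr rfl fun C hC ↦ (mem_filter.1 hC).2

lemma disjoint_isolated (hK : IsOddBarrier G X K) (hC : C ∈ K) (hC1 : #C ≠ 1) :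
    Disjoint (isolated K) C := by
  refine (disjoint_biUnion_left _ _ _).2 fun D hD ↦ ?_
  rw [mem_filter] at hD
  exact hK.pairwiseDisjoint hD.1 hC (by rintro rfl; exact hC1 hD.2)

lemma neighborhood_isolated_subset (hK : IsOddBarrier G X K) :
    neighborhood G (isolated K) ⊆ X := by
  intro w hw
  obtain ⟨v, hv, hvw⟩ := mem_neighborhood.1 hw
  obtain ⟨C, hC, hvC⟩ := mem_biUnion.1 hv
  rw [mem_filter, card_eq_one] at hC
  obtain ⟨hCK, u, rfl⟩ := hC
  obtain rfl := mem_singleton.1 hvC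
  have hwC := hK.neighborhood_subset _ hCK (mem_neighborhood.2 ⟨v, hvC, hvw⟩)
  exact (mem_union.1 hwC).resolve_right fun hw ↦ hvw.ne (mem_singleton.1 hw).symm

lemma disjoint_neighborhood_isolated_union (hK : IsOddBarrier G X K) (hC : C ∈ K) (hD : D ∈ K)
    (hne : C ≠ D) : Disjoint (neighborhood G (isolated K ∪ C)) D := by
  rw [neighborhood_union, disjoint_union_left]
  refine ⟨(hK.disjoint D hD).mono_left hK.neighborhood_isolated_subset, ?_⟩
  exact (disjoint_union_left.2 ⟨hK.disjoint D hD, hK.pairwiseDisjoint hC hD hne⟩).mono_left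
    (hK.neighborhood_subset C hC)

lemma two_le_card_filter_card_ne_one (hK : IsOddBarrier G X K) (hexp : IsExpanding G h)
    (hX : h ≤ #X) (hXK : #X + 2 ≤ #K + h) : 2 ≤ #{C ∈ K | #C ≠ 1} := by
  have hsplit : #{C ∈ K | #C = 1} + #{C ∈ K | #C ≠ 1} = #K := card_filter_add_card_filter_not _
  rw [← hK.card_isolated] at hsplit
  obtain hI | hI := (isolated K).eq_empty_or_nonempty
  · rw [hI, card_empty] at hsplit
    omega
  have hsub := hK.neighborhood_isolated_subset
  obtain ⟨C, hC⟩ : K.Nonempty := card_pos.1 (by have := card_pos.2 hI; omega)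
  have := hexp _ hI (hK.ne_univ_of_disjoint hC ((hK.disjoint C hC).mono_left hsub))
  have := card_le_card hsub
  omega

lemma sum_cutSize_add_card_interedges_le (hK : IsOddBarrier G X K)
    (hreg : G.IsRegularOfDegree k) :
    ∑ C ∈ K, cutSize G C + #(G.interedges X X) ≤ k * #X := by
  have hle := sum_card_interedges_inter_le hK.pairwiseDisjoint hK.disjoint X univ (G := G)
  simp only [inter_univ, card_interedges_univ hreg] at hle
  refine (Nat.add_le_add_right (sum_le_sum fun C hC ↦ ?_) _).trans hle
  rw [card_interedges_comm X]
  refine card_le_card fun p hp ↦ ?_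
  obtain ⟨h₁, h₂, hadj⟩ := G.mem_interedges_iff.1 hp
  have hmem := hK.neighborhood_subset C hC (mem_neighborhood.2 ⟨_, h₁, hadj⟩)
  exact G.mem_interedges_iff.2 ⟨h₁, (mem_union.1 hmem).resolve_right (mem_compl.1 h₂), hadj⟩

lemma sum_cutSize_filter_card_ne_one_add_le (hK : IsOddBarrier G X K)
    (hreg : G.IsRegularOfDegree k) (hXK : #X ≤ #K + d) :
    ∑ C ∈ K with #C ≠ 1, cutSize G C + #(G.interedges X X) ≤ k * (#{C ∈ K | #C ≠ 1} + d) := by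
  have hsum := hK.sum_cutSize_add_card_interedges_le hreg
  rw [← sum_filter_add_sum_filter_not K (#· = 1)] at hsum
  have hsplit : #{C ∈ K | #C = 1} + #{C ∈ K | #C ≠ 1} = #K := card_filter_add_card_filter_not _
  have hsingle : #{C ∈ K | #C = 1} * k ≤ ∑ C ∈ K with #C = 1, cutSize G C := by
    refine card_nsmul_le_sum _ _ _ fun C hC ↦ ?_
    have := mul_card_add_card_le_cutSize_add hreg C
    rw [(mem_filter.1 hC).2] at this
    omega
  have hmul : k * #X ≤ k * (#{C ∈ K | #C = 1} + #{C ∈ K | #C ≠ 1} + d) :=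
    Nat.mul_le_mul_left k (by omega)
  linarith

lemma three_le_card (hK : IsOddBarrier G X K) (hC : C ∈ K) (hC1 : #C ≠ 1) : 3 ≤ #C := by
  obtain ⟨r, hr⟩ := hK.odd_card C hC
  omega

lemma exists_filter_card_ne_one_eq_pair (hK : IsOddBarrier G X K) (hreg : G.IsRegularOfDegree k)
    (hk : 3 ≤ k) (hexp : IsExpanding G 4)
    (hcut : ∀ Z : Finset V, 2 ≤ #Z → #Z + 2 ≤ Fintype.card V → 2 * k ≤ cutSize G Z + 2)
    (hX : 4 ≤ #X) (hXX : 4 ≤ #(G.interedges X X)) (hXK : #X ≤ #K + 2) :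
    ∃ C D, C ≠ D ∧ {C ∈ K | #C ≠ 1} = ({C, D} : Finset (Finset V)) ∧
      cutSize G C + 2 = 2 * k ∧ cutSize G D + 2 = 2 * k := by
  have hlow : ∀ C ∈ ({C ∈ K | #C ≠ 1} : Finset (Finset V)), 2 * k - 2 ≤ cutSize G C := by
    intro C hC
    rw [mem_filter] at hC
    have hC3 := hK.three_le_card hC.1 hC.2
    have hXC := card_le_univ (X ∪ C)
    rw [card_union_of_disjoint (hK.disjoint C hC.1)] at hXC
    have := hcut C (by omega) (by omega)
    omega
  have htwo := hK.two_le_card_filter_card_ne_one hexp hX (by omega)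
  have hsum := hK.sum_cutSize_filter_card_ne_one_add_le hreg hXK
  have hcard : #{C ∈ K | #C ≠ 1} = 2 := by
    have hmul : #{C ∈ K | #C ≠ 1} * (2 * k - 2) ≤ ∑ C ∈ K with #C ≠ 1, cutSize G C :=
      card_nsmul_le_sum _ _ _ hlow
    refine le_antisymm ?_ htwo
    by_contra! hthree
    obtain ⟨s, hs⟩ := Nat.exists_eq_add_of_le hthree
    obtain ⟨j, rfl⟩ := Nat.exists_eq_add_of_le hk
    rw [hs, show 2 * (3 + j) - 2 = 4 + 2 * j by omega] at hmul
    rw [hs] at hsum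
    linarith [Nat.zero_le (s * j)]
  obtain ⟨C, D, hne, hCD⟩ := card_eq_two.1 hcard
  rw [hcard] at hsum
  rw [hCD] at hlow hsum
  rw [sum_pair hne] at hsum
  have := hlow C (by simp)
  have := hlow D (by simp)
  exact ⟨C, D, hne, hCD, by omega, by omega⟩

lemma isTight_isolated_union (hK : IsOddBarrier G X K) (hC : C ∈ K) (hC1 : #C ≠ 1) (hD : D ∈ K)
    (hne : C ≠ D) (hX : #X ≤ #(isolated K) + h) : IsTight G h (isolated K ∪ C) := by
  refine ⟨(hK.nonempty hC).inr, hK.ne_univ_of_disjoint hD ?_, ?_⟩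
  · exact hK.disjoint_neighborhood_isolated_union hC hD hne
  · have hsub : neighborhood G (isolated K ∪ C) ⊆ X ∪ C := by
      rw [neighborhood_union]
      exact union_subset (hK.neighborhood_isolated_subset.trans subset_union_left)
        (hK.neighborhood_subset C hC)
    rw [card_union_of_disjoint (hK.disjoint_isolated hC hC1)]
    have := (card_le_card hsub).trans (card_union_le _ _)
    omega

lemma isTight_isolated (hK : IsOddBarrier G X K) (hI : (isolated K).Nonempty) (hD : D ∈ K)
    (hX : #X ≤ #(isolated K) + h) : IsTight G h (isolated K) := by
  refine ⟨hI, hK.ne_univ_of_disjoint hD ?_, (card_le_card hK.neighborhood_isolated_subset).trans hX⟩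
  exact (hK.disjoint D hD).mono_left hK.neighborhood_isolated_subset

lemma even_of_even_cutSize (hK : IsOddBarrier G X K) (hreg : G.IsRegularOfDegree k) (hC : C ∈ K)
    (hcut : Even (cutSize G C)) : Even k := by
  have hsum := (even_card_interedges_self (G := G) C).add hcut
  rw [card_interedges_self_add_cutSize hreg, Nat.even_mul] at hsum
  exact hsum.resolve_right (Nat.not_even_iff_odd.2 (hK.odd_card C hC))

lemma five_le_card (hK : IsOddBarrier G X K) (hreg : G.IsRegularOfDegree k) (hk : 5 ≤ k)
    (hC : C ∈ K) (hC1 : #C ≠ 1) (hcut : cutSize G C + 2 = 2 * k) : 5 ≤ #C := by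
  have h3 := hK.three_le_card hC hC1
  obtain ⟨r, hr⟩ := hK.odd_card C hC
  by_contra! hlt
  have hC3 : #C = 3 := by omega
  have := mul_card_add_card_le_cutSize_add hreg C
  rw [hC3] at this
  omega

lemma exists_cutSize_add_two_lt (hK : IsOddBarrier G X K) (hreg : G.IsRegularOfDegree k)
    (hk : 5 ≤ k) (hexp : IsExpanding G 4)
    (htight : 6 ≤ k → ∀ S, IsTight G 4 S → #S + 8 ≤ Fintype.card V → Even #S)
    (hX : 4 ≤ #X) (hXX : 4 ≤ #(G.interedges X X)) (hXK : #X ≤ #K + 2) :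
    ∃ Z : Finset V, 2 ≤ #Z ∧ #Z + 2 ≤ Fintype.card V ∧ cutSize G Z + 2 < 2 * k := by
  by_contra! hcut
  obtain ⟨C, D, hne, hCD, hcutC, hcutD⟩ :=
    hK.exists_filter_card_ne_one_eq_pair hreg (by omega) hexp hcut hX hXX hXK
  obtain ⟨hC, hC1⟩ : C ∈ K ∧ #C ≠ 1 := mem_filter.1 (hCD ▸ mem_insert_self C {D})
  obtain ⟨hD, hD1⟩ : D ∈ K ∧ #D ≠ 1 :=
    mem_filter.1 (hCD ▸ mem_insert_of_mem (mem_singleton_self D))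
  have heven : Even k := hK.even_of_even_cutSize hreg hC ⟨k - 1, by omega⟩
  have hk6 : 6 ≤ k := by
    obtain ⟨r, rfl⟩ := heven
    omega
  have hI : #X ≤ #(isolated K) + 4 := by
    have hsplit : #{C ∈ K | #C = 1} + #{C ∈ K | #C ≠ 1} = #K := card_filter_add_card_filter_not _
    rw [hCD, card_pair hne, ← hK.card_isolated] at hsplit
    omega
  have hcard := card_union_of_disjoint (hK.disjoint_isolated hC hC1)
  have hIC := hK.isTight_isolated_union hC hC1 hD hne hI
  have hroom : #(isolated K ∪ C) + 8 ≤ Fintype.card V := by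
    have hNIC := hexp _ hIC.nonempty hIC.neighborhood_ne_univ
    have hcardV := card_le_univ (neighborhood G (isolated K ∪ C) ∪ D)
    rw [card_union_of_disjoint (hK.disjoint_neighborhood_isolated_union hC hD hne)] at hcardV
    have := hK.five_le_card hreg hk hD hD1 hcutD
    omega
  have hevenIC := htight hk6 _ hIC hroom
  rw [hcard] at hroom hevenIC
  have hevenI : Even #(isolated K) := by
    obtain hI0 | hIne := (isolated K).eq_empty_or_nonempty
    · simp [hI0]
    · exact htight hk6 _ (hK.isTight_isolated hIne hD hI) (by omega)
  exact Nat.not_even_iff_odd.2 (hK.odd_card C hC) ((Nat.even_add.1 hevenIC).1 hevenI)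

end IsOddBarrier

end LargeCuts

/-! ### Counting across a matched partition -/

section MatchedPartitions

variable [DecidableEq V] {S T X C : Finset V} {a k : ℕ} {o : V → V}

/-- The number of vertices of `S` that `o` sends into `T`. For the map `o` of a matched partition,
these count the edges between different parts that go from `S` to `T`. -/
def matchCount (o : V → V) (S T : Finset V) : ℕ := #{v ∈ S | o v ∈ T}

lemma matchCount_comm (ho : Function.Involutive o) (S T : Finset V) :
    matchCount o S T = matchCount o T S := by
  refine card_nbij' o o ?_ ?_ (fun v _ ↦ ho v) fun v _ ↦ ho v <;>
  · intro v hv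
    simp only [coe_filter, Set.mem_ofPred_eq] at hv ⊢
    rw [ho]
    exact hv.symm

lemma sum_matchCount_add_matchCount_le {K : Finset (Finset V)}
    (hK : (K : Set (Finset V)).PairwiseDisjoint id) (hX : ∀ C ∈ K, Disjoint X C) (S : Finset V) :
    ∑ C ∈ K, matchCount o S C + matchCount o S X ≤ #S := by
  have hdisj {C D : Finset V} (h : Disjoint C D) :
      Disjoint ({v ∈ S | o v ∈ C} : Finset V) {v ∈ S | o v ∈ D} :=
    disjoint_filter.2 fun _ _ hC hD ↦ Finset.disjoint_left.1 h hC hD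
  unfold matchCount
  rw [← card_biUnion fun C hC D hD hCD ↦ hdisj (C := C) (D := D) (hK hC hD hCD),
    ← card_union_of_disjoint ((disjoint_biUnion_left _ _ _).2 fun C hC ↦ hdisj (hX C hC).symm)]
  exact card_le_card (union_subset (biUnion_subset.2 fun _ _ ↦ filter_subset _ _)
    (filter_subset _ _))

variable [Fintype V] {P : Finpartition (univ : Finset V)} {B : Finset V}

lemma sum_card_inter_parts (P : Finpartition (univ : Finset V)) (S : Finset V) :
    ∑ B ∈ P.parts, #(B ∩ S) = #S := by
  have hdisj : (P.parts : Set (Finset V)).PairwiseDisjoint fun B ↦ B ∩ S :=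
    P.disjoint.mono fun B ↦ inter_subset_left
  rw [← card_biUnion hdisj]
  congr 1
  ext v
  simp only [mem_biUnion, mem_inter]
  exact ⟨fun ⟨_, _, _, hv⟩ ↦ hv,
    fun hv ↦ ⟨P.part v, P.part_mem.2 (mem_univ v), P.mem_part (mem_univ v), hv⟩⟩

/-- The parts of `P` that meet `S` without being contained in it. -/
def splitParts (P : Finpartition (univ : Finset V)) (S : Finset V) : Finset (Finset V) :=
  {B ∈ P.parts | (B ∩ S).Nonempty ∧ (B \ S).Nonempty}

lemma part_subset_of_notMem_splitParts {v : V} (hv : v ∈ S) (h : P.part v ∉ splitParts P S) :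
    P.part v ⊆ S := by
  by_contra hsub
  exact h (mem_filter.2 ⟨P.part_mem.2 (mem_univ v), ⟨v, mem_inter.2 ⟨P.mem_part (mem_univ v), hv⟩⟩,
    sdiff_nonempty.2 hsub⟩)

lemma saturated_sdiff_of_splitParts_subset (hB : B ∈ P.parts) (h : splitParts P S ⊆ {B}) :
    Saturated P (S \ B) := by
  intro v hv
  rw [mem_sdiff] at hv
  have hne : P.part v ≠ B := fun heq ↦ hv.2 (heq ▸ P.mem_part (mem_univ v))
  refine subset_sdiff.2 ⟨?_, P.disjoint (P.part_mem.2 (mem_univ v)) hB hne⟩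
  exact part_subset_of_notMem_splitParts hv.1 fun hmem ↦ hne (mem_singleton.1 (h hmem))

lemma saturated_union_of_splitParts_subset (hB : B ∈ P.parts) (h : splitParts P S ⊆ {B}) :
    Saturated P (S ∪ B) := by
  intro v hv
  by_cases hvB : v ∈ B
  · exact (P.part_eq_of_mem hB hvB).le.trans subset_union_right
  · have hvS := (mem_union.1 hv).resolve_right hvB
    exact (saturated_sdiff_of_splitParts_subset hB h v (mem_sdiff.2 ⟨hvS, hvB⟩)).trans
      (sdiff_subset.trans subset_union_left)

namespace IsMatchedPartition

lemma adj (hP : IsMatchedPartition G P o) (v : V) : G.Adj v (o v) := ((hP v _).2 rfl).1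

lemma notMem_part (hP : IsMatchedPartition G P o) (v : V) : o v ∉ P.part v := ((hP v _).2 rfl).2

lemma involutive (hP : IsMatchedPartition G P o) : Function.Involutive o := fun v ↦
  ((hP (o v) v).1 ⟨(hP.adj v).symm, fun hv ↦ hP.notMem_part v <| by
    rw [P.part_eq_of_mem (P.part_mem.2 (mem_univ _)) hv]
    exact P.mem_part (mem_univ _)⟩).symm

variable [DecidableRel G.Adj]

lemma card_interedges_le (hP : IsMatchedPartition G P o) (S T : Finset V) :
    #(G.interedges S T) ≤ ∑ B ∈ P.parts, #(G.interedges (B ∩ S) (B ∩ T)) + matchCount o S T := by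
  have hsub : G.interedges S T ⊆ P.parts.biUnion (fun B ↦ G.interedges (B ∩ S) (B ∩ T)) ∪
      ({v ∈ S | o v ∈ T} : Finset V).image fun v ↦ (v, o v) := by
    rintro ⟨v, w⟩ hvw
    obtain ⟨hv, hw, hadj⟩ := G.mk_mem_interedges_iff.1 hvw
    rw [mem_union, mem_biUnion, mem_image]
    by_cases hpart : w ∈ P.part v
    · exact .inl ⟨P.part v, P.part_mem.2 (mem_univ v), G.mk_mem_interedges_iff.2
        ⟨mem_inter.2 ⟨P.mem_part (mem_univ v), hv⟩, mem_inter.2 ⟨hpart, hw⟩, hadj⟩⟩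
    · obtain rfl := (hP v w).1 ⟨hadj, hpart⟩
      exact .inr ⟨v, mem_filter.2 ⟨hv, hw⟩, rfl⟩
  exact (card_le_card hsub).trans
    ((card_union_le _ _).trans (add_le_add card_biUnion_le card_image_le))

lemma cutSize_le_matchCount (hP : IsMatchedPartition G P o) (hS : Saturated P S) :
    cutSize G S ≤ matchCount o S Sᶜ := by
  have hzero : ∑ B ∈ P.parts, #(G.interedges (B ∩ S) (B ∩ Sᶜ)) = 0 := by
    refine sum_eq_zero fun B hB ↦ card_eq_zero.2 (eq_empty_of_forall_notMem fun p hp ↦ ?_)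
    obtain ⟨h₁, h₂, -⟩ := G.mem_interedges_iff.1 hp
    rw [mem_inter] at h₁ h₂
    exact mem_compl.1 h₂.2 (hS _ h₁.2 (P.part_eq_of_mem hB h₁.1 ▸ h₂.1))
  have := hP.card_interedges_le S Sᶜ
  rwa [hzero, zero_add] at this

lemma card_interedges_part_add_one (hP : IsMatchedPartition G P o)
    (hreg : G.IsRegularOfDegree k) (v : V) : #(G.interedges {v} (P.part v)) + 1 = k := by
  have hout : {w ∈ (P.part v)ᶜ | G.Adj v w} = {o v} := by
    ext w
    rw [mem_filter, mem_compl, mem_singleton, and_comm, hP]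
  have hsplit := card_interedges_add_card_interedges_compl hreg {v} (P.part v)
  rwa [card_interedges_singleton_left v (P.part v)ᶜ, hout, card_singleton, card_singleton,
    mul_one] at hsplit

lemma card_interedges_eq_of_subset (hP : IsMatchedPartition G P o) (hreg : G.IsRegularOfDegree k)
    (hB : B ∈ P.parts) (hS : S ⊆ B) : #(G.interedges S B) = (k - 1) * #S := by
  rw [card_interedges_eq_sum, sum_const_nat (m := k - 1), mul_comm]
  intro v hv
  have := hP.card_interedges_part_add_one hreg v
  rw [P.part_eq_of_mem hB (hS hv)] at this
  omega

lemma mul_card_le_card_interedges_sdiff_add (hP : IsMatchedPartition G P o)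
    (hreg : G.IsRegularOfDegree k) (hB : B ∈ P.parts) (hS : S ⊆ B) :
    k * #S ≤ #(G.interedges S (B \ S)) + #S * #S := by
  have hinner := hP.card_interedges_eq_of_subset hreg hB hS
  have hsplit := card_interedges_union_right (G := G) (S := S) (disjoint_sdiff (s := S) (t := B))
  rw [union_sdiff_of_subset hS, hinner, Nat.sub_one_mul] at hsplit
  have := card_interedges_self_add_card_le (G := G) S
  omega

/-- A part that is not too large forces `S` or `B \ S` to have between `a` and `k - a` vertices,
where the concave bound `s * (k - s)` on the edges between them is smallest at the ends. -/
lemma mul_sub_le_card_interedges_sdiff (hP : IsMatchedPartition G P o)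
    (hreg : G.IsRegularOfDegree k) (hB : B ∈ P.parts) (hS : S ⊆ B) (ha : a ≤ #S)
    (ha' : a ≤ #(B \ S)) (hsize : #B + 2 * a < 2 * k + 2) :
    a * (k - a) ≤ #(G.interedges S (B \ S)) := by
  have hconcave {s D : ℕ} (has : a ≤ s) (hsk : s + a ≤ k) (h : k * s ≤ D + s * s) :
      a * (k - a) ≤ D := by
    obtain ⟨i, rfl⟩ := Nat.exists_eq_add_of_le has
    obtain ⟨j, rfl⟩ := Nat.exists_eq_add_of_le hsk
    rw [show a + i + a + j - a = a + i + j by omega]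
    nlinarith [Nat.zero_le (i * j)]
  have hcompl := hP.mul_card_le_card_interedges_sdiff_add hreg hB (sdiff_subset (s := B) (t := S))
  rw [Finset.sdiff_sdiff_eq_self hS, card_interedges_comm] at hcompl
  have hcard := card_sdiff_add_card_eq_card hS
  by_cases h : #S + a ≤ k
  · exact hconcave ha h (hP.mul_card_le_card_interedges_sdiff_add hreg hB hS)
  · exact hconcave ha' (by omega) hcompl

end IsMatchedPartition

end MatchedPartitions

section SmallCuts

variable [Fintype V] [DecidableEq V] [DecidableRel G.Adj] {B C D S X : Finset V}
  {K : Finset (Finset V)} {k : ℕ} {P : Finpartition (univ : Finset V)} {o : V → V}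

lemma add_add_card_le_sum_add_two {ι : Type*} {s : Finset ι} {f : ι → ℕ}
    (hf : ∀ i ∈ s, 1 ≤ f i) {a b : ι} (ha : a ∈ s) (hb : b ∈ s) (hab : a ≠ b) :
    f a + f b + #s ≤ ∑ i ∈ s, f i + 2 := by
  classical
  have hb' : b ∈ s.erase a := mem_erase.2 ⟨hab.symm, hb⟩
  have hrest := card_nsmul_le_sum ((s.erase a).erase b) (f ·) 1
    fun i hi ↦ hf i (mem_of_mem_erase (mem_of_mem_erase hi))
  rw [smul_eq_mul, card_erase_of_mem hb', card_erase_of_mem ha] at hrest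
  rw [← add_sum_erase _ _ ha, ← add_sum_erase _ _ hb']
  omega

namespace IsOddBarrier

lemma apply_mem (hK : IsOddBarrier G X K) (hP : IsMatchedPartition G P o) (hC : C ∈ K) {v : V}
    (hv : v ∈ C) (ho : o v ∉ X) : o v ∈ C :=
  (mem_union.1 (hK.neighborhood_subset C hC
    (mem_neighborhood.2 ⟨v, hv, hP.adj v⟩))).resolve_left ho

lemma odd_matchCount (hK : IsOddBarrier G X K) (hP : IsMatchedPartition G P o) (hC : C ∈ K) :
    Odd (matchCount o C X) := by
  have hsplit : matchCount o C X + #{v ∈ C | o v ∉ X} = #C := card_filter_add_card_filter_not _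
  have hinside : Even #{v ∈ C | o v ∉ X} := by
    rw [← ZMod.natCast_eq_zero_iff_even, Finset.cast_card]
    refine sum_involution (fun v _ ↦ o v) (fun _ _ ↦ by decide) (fun v _ _ ↦ (hP.adj v).ne')
      (fun v hv ↦ ?_) fun v _ ↦ hP.involutive v
    obtain ⟨hvC, hvo⟩ := mem_filter.1 hv
    refine mem_filter.2 ⟨hK.apply_mem hP hC hvC hvo, ?_⟩
    rw [hP.involutive]
    exact Finset.disjoint_right.1 (hK.disjoint C hC) hvC
  have hodd := hK.odd_card C hC
  rw [← hsplit, Nat.odd_add] at hodd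
  exact hodd.2 hinside

lemma sum_matchCount_add_matchCount_le (hK : IsOddBarrier G X K)
    (hP : IsMatchedPartition G P o) :
    ∑ C ∈ K, matchCount o C X + matchCount o X X ≤ #X := by
  simp only [matchCount_comm hP.involutive _ X]
  exact TwoExtendable.sum_matchCount_add_matchCount_le hK.pairwiseDisjoint hK.disjoint X

lemma sum_card_interedges_part_add_le (hK : IsOddBarrier G X K) (hP : IsMatchedPartition G P o)
    (hreg : G.IsRegularOfDegree k) (hB : B ∈ P.parts) :
    ∑ C ∈ K, #(G.interedges (B ∩ C) (B \ C)) + #(G.interedges (B ∩ X) (B ∩ X)) ≤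
      (k - 1) * #(B ∩ X) := by
  have hle := sum_card_interedges_inter_le (G := G) hK.pairwiseDisjoint hK.disjoint (B ∩ X) B
  rw [hP.card_interedges_eq_of_subset hreg hB inter_subset_left, inter_comm X B] at hle
  refine (Nat.add_le_add_right (sum_le_sum fun C hC ↦ ?_) _).trans hle
  rw [card_interedges_comm (B ∩ X)]
  refine card_le_card fun p hp ↦ ?_
  obtain ⟨h₁, h₂, hadj⟩ := G.mem_interedges_iff.1 hp
  rw [mem_inter] at h₁
  rw [mem_sdiff] at h₂
  have hmem := hK.neighborhood_subset C hC (mem_neighborhood.2 ⟨_, h₁.2, hadj⟩)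
  exact G.mem_interedges_iff.2 ⟨mem_inter.2 h₁.symm,
    mem_inter.2 ⟨h₂.1, (mem_union.1 hmem).resolve_right h₂.2⟩, hadj⟩

lemma sum_splitParts_card_interedges_add_le (hK : IsOddBarrier G X K)
    (hP : IsMatchedPartition G P o) (hreg : G.IsRegularOfDegree k) :
    ∑ C ∈ K, ∑ B ∈ splitParts P C, #(G.interedges (B ∩ C) (B \ C)) +
      ∑ B ∈ P.parts, #(G.interedges (B ∩ X) (B ∩ X)) ≤ (k - 1) * #X := by
  calc _ ≤ ∑ C ∈ K, ∑ B ∈ P.parts, #(G.interedges (B ∩ C) (B \ C)) +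
        ∑ B ∈ P.parts, #(G.interedges (B ∩ X) (B ∩ X)) :=
      Nat.add_le_add_right (sum_le_sum fun C _ ↦ sum_le_sum_of_subset (filter_subset _ _)) _
    _ ≤ ∑ B ∈ P.parts, (k - 1) * #(B ∩ X) := by
      rw [sum_comm, ← sum_add_distrib]
      exact sum_le_sum fun B hB ↦ hK.sum_card_interedges_part_add_le hP hreg hB
    _ = (k - 1) * #X := by rw [← mul_sum, sum_card_inter_parts]

end IsOddBarrier

namespace IsMatchedPartition

lemma mul_sub_le_card_interedges_inter_sdiff {a : ℕ} (hP : IsMatchedPartition G P o)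
    (hreg : G.IsRegularOfDegree k) (hB : B ∈ P.parts) (ha : a ≤ #(B ∩ C)) (ha' : a ≤ #(B \ C))
    (hsize : #B + 2 * a < 2 * k + 2) : a * (k - a) ≤ #(G.interedges (B ∩ C) (B \ C)) := by
  have := hP.mul_sub_le_card_interedges_sdiff hreg hB inter_subset_left ha
    (by rwa [sdiff_inter_self_left]) hsize
  rwa [sdiff_inter_self_left] at this

lemma sub_one_le_card_interedges_of_mem_splitParts (hP : IsMatchedPartition G P o)
    (hreg : G.IsRegularOfDegree k) (hsize : ∀ B ∈ P.parts, #B < 2 * k) (hB : B ∈ splitParts P C) :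
    k - 1 ≤ #(G.interedges (B ∩ C) (B \ C)) := by
  obtain ⟨hBP, hinter, hdiff⟩ := mem_filter.1 hB
  have := hsize B hBP
  have := hP.mul_sub_le_card_interedges_inter_sdiff (a := 1) hreg hBP (card_pos.2 hinter)
    (card_pos.2 hdiff) (by omega)
  rwa [one_mul] at this

end IsMatchedPartition

namespace IsOddBarrier

lemma mul_sum_card_splitParts_add_le (hK : IsOddBarrier G X K) (hP : IsMatchedPartition G P o)
    (hreg : G.IsRegularOfDegree k) (hsize : ∀ B ∈ P.parts, #B < 2 * k) :
    (k - 1) * ∑ C ∈ K, #(splitParts P C) + ∑ B ∈ P.parts, #(G.interedges (B ∩ X) (B ∩ X)) ≤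
      (k - 1) * #X := by
  refine (Nat.add_le_add_right ?_ _).trans (hK.sum_splitParts_card_interedges_add_le hP hreg)
  rw [mul_comm, sum_mul]
  exact sum_le_sum fun C _ ↦ card_nsmul_le_sum _ _ _ fun B hB ↦
    hP.sub_one_le_card_interedges_of_mem_splitParts hreg hsize hB

lemma card_filter_mem_splitParts_le (hK : IsOddBarrier G X K) (hP : IsMatchedPartition G P o)
    (hreg : G.IsRegularOfDegree k) (hk : 2 ≤ k) (hsize : ∀ B ∈ P.parts, #B < 2 * k)
    (hB : B ∈ P.parts) : #{C ∈ K | B ∈ splitParts P C} ≤ #(B ∩ X) := by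
  have hlow : #{C ∈ K | B ∈ splitParts P C} * (k - 1) ≤
      ∑ C ∈ K with B ∈ splitParts P C, #(G.interedges (B ∩ C) (B \ C)) :=
    card_nsmul_le_sum _ _ _ fun C hC ↦
      hP.sub_one_le_card_interedges_of_mem_splitParts hreg hsize (mem_filter.1 hC).2
  have hsum := hK.sum_card_interedges_part_add_le hP hreg hB
  have hsub : ∑ C ∈ K with B ∈ splitParts P C, #(G.interedges (B ∩ C) (B \ C)) ≤
      ∑ C ∈ K, #(G.interedges (B ∩ C) (B \ C)) := sum_le_sum_of_subset (filter_subset _ _)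
  refine Nat.le_of_mul_le_mul_left ?_ (show 0 < k - 1 by omega)
  rw [mul_comm] at hlow
  omega

lemma card_inter_add_sum_card_splitParts_le (hK : IsOddBarrier G X K)
    (hP : IsMatchedPartition G P o) (hreg : G.IsRegularOfDegree k) (hk : 2 ≤ k)
    (hsize : ∀ B ∈ P.parts, #B < 2 * k) (hB : B ∈ P.parts) :
    #(B ∩ X) + ∑ C ∈ K, #(splitParts P C) ≤ #{C ∈ K | B ∈ splitParts P C} + #X := by
  have hcount : ∑ C ∈ K, #(splitParts P C) = ∑ B ∈ P.parts, #{C ∈ K | B ∈ splitParts P C} := by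
    refine Eq.trans (sum_congr rfl fun C _ ↦ congr_arg card ?_)
      (sum_card_bipartiteAbove_eq_sum_card_bipartiteBelow fun C B ↦ B ∈ splitParts P C)
    exact (filter_mem_eq_inter.trans (inter_eq_right.2 (filter_subset _ _))).symm
  rw [hcount, ← sum_card_inter_parts P X, ← add_sum_erase _ _ hB,
    ← add_sum_erase _ (fun B ↦ #(B ∩ X)) hB]
  have : ∑ D ∈ P.parts.erase B, #{C ∈ K | D ∈ splitParts P C} ≤
      ∑ D ∈ P.parts.erase B, #(D ∩ X) := sum_le_sum fun D hD ↦
    hK.card_filter_mem_splitParts_le hP hreg hk hsize (mem_of_mem_erase hD)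
  omega

end IsOddBarrier

namespace IsMatchedPartition

lemma le_matchCount_compl (hP : IsMatchedPartition G P o)
    (hcut : ∀ Z : Finset V, Z.Nonempty → Z ≠ univ → k ≤ cutSize G Z) (hS : Saturated P S)
    (hne : S.Nonempty) (hne' : S ≠ univ) : k ≤ matchCount o S Sᶜ :=
  (hcut S hne hne').trans (hP.cutSize_le_matchCount hS)

end IsMatchedPartition

namespace IsOddBarrier

lemma ne_univ_of_subset (hK : IsOddBarrier G X K) (hX : X.Nonempty) (hC : C ∈ K) (h : S ⊆ C) :
    S ≠ univ := by
  rintro rfl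
  exact hX.ne_empty (disjoint_top.1 ((hK.disjoint C hC).mono_right h))

lemma splitParts_nonempty (hK : IsOddBarrier G X K) (hP : IsMatchedPartition G P o)
    (hcut : ∀ Z : Finset V, Z.Nonempty → Z ≠ univ → k ≤ cutSize G Z) (hX : X.Nonempty)
    (hC : C ∈ K) (hlt : matchCount o C X < k) : (splitParts P C).Nonempty := by
  by_contra! hempty
  have hsat : Saturated P C := fun v hv ↦
    part_subset_of_notMem_splitParts hv (hempty ▸ notMem_empty _)
  have hne := hK.ne_univ_of_subset hX hC Subset.rfl
  refine hlt.not_ge ((hP.le_matchCount_compl hcut hsat (hK.nonempty hC) hne).trans ?_)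
  refine card_le_card fun v hv ↦ ?_
  rw [mem_filter, mem_compl] at hv
  refine mem_filter.2 ⟨hv.1, ?_⟩
  by_contra hvX
  exact hv.2 (hK.apply_mem hP hC hv.1 hvX)

lemma le_matchCount_add_card_inter (hK : IsOddBarrier G X K) (hP : IsMatchedPartition G P o)
    (hcut : ∀ Z : Finset V, Z.Nonempty → Z ≠ univ → k ≤ cutSize G Z) (hX : X.Nonempty)
    (hC : C ∈ K) (hB : B ∈ P.parts) (hsplit : splitParts P C ⊆ {B}) (hne : (C \ B).Nonempty) :
    k ≤ matchCount o C X + #(B ∩ C) := by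
  have hne' := hK.ne_univ_of_subset hX hC (sdiff_subset (s := C) (t := B))
  have hsat := saturated_sdiff_of_splitParts_subset hB hsplit
  have hsub : {v ∈ C \ B | o v ∈ (C \ B)ᶜ} ⊆ {v ∈ C | o v ∈ X} ∪ (B ∩ C).image o := by
    intro v hv
    simp only [mem_filter, mem_compl, mem_sdiff, mem_union, mem_image, mem_inter] at hv ⊢
    refine or_iff_not_imp_left.2 fun hvX ↦ ?_
    have hoC := hK.apply_mem hP hC hv.1.1 fun h ↦ hvX ⟨hv.1.1, h⟩
    refine ⟨o v, ⟨?_, hoC⟩, hP.involutive v⟩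
    by_contra hoB
    exact hv.2 ⟨hoC, hoB⟩
  calc k ≤ matchCount o (C \ B) (C \ B)ᶜ := hP.le_matchCount_compl hcut hsat hne hne'
    _ ≤ #({v ∈ C | o v ∈ X} ∪ (B ∩ C).image o) := card_le_card hsub
    _ ≤ matchCount o C X + #(B ∩ C) :=
      (card_union_le _ _).trans (Nat.add_le_add_left card_image_le _)

lemma le_matchCount_add_card_sdiff (hK : IsOddBarrier G X K) (hP : IsMatchedPartition G P o)
    (hcut : ∀ Z : Finset V, Z.Nonempty → Z ≠ univ → k ≤ cutSize G Z)
    (hC : C ∈ K) (hB : B ∈ P.parts) (hsplit : splitParts P C ⊆ {B}) (hlt : #(B \ C) < #X) :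
    k ≤ matchCount o C X + #(B \ C) := by
  have hne : C ∪ B ≠ univ := fun h ↦ hlt.not_ge <| card_le_card fun v hv ↦ by
    have hvC := Finset.disjoint_left.1 (hK.disjoint C hC) hv
    exact mem_sdiff.2 ⟨(mem_union.1 (h ▸ mem_univ v)).resolve_left hvC, hvC⟩
  have hsat := saturated_union_of_splitParts_subset hB hsplit
  have hsub : {v ∈ C ∪ B | o v ∈ (C ∪ B)ᶜ} ⊆ {v ∈ C | o v ∈ X} ∪ B \ C := by
    intro v hv
    simp only [mem_filter, mem_compl, mem_union, mem_sdiff] at hv ⊢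
    by_cases hvC : v ∈ C
    · refine .inl ⟨hvC, ?_⟩
      by_contra hvX
      exact hv.2 (.inl (hK.apply_mem hP hC hvC hvX))
    · exact .inr ⟨hv.1.resolve_left hvC, hvC⟩
  calc k ≤ matchCount o (C ∪ B) (C ∪ B)ᶜ :=
      hP.le_matchCount_compl hcut hsat (hK.nonempty hC).inl hne
    _ ≤ #({v ∈ C | o v ∈ X} ∪ B \ C) := card_le_card hsub
    _ ≤ matchCount o C X + #(B \ C) := card_union_le _ _

lemma matchCount_eq_card_of_subset (hK : IsOddBarrier G X K) (hP : IsMatchedPartition G P o)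
    (hC : C ∈ K) (hB : B ∈ P.parts) (hCB : C ⊆ B) : matchCount o C X = #C := by
  refine congr_arg card (filter_true_of_mem fun v hv ↦ ?_)
  by_contra hvX
  apply hP.notMem_part v
  rw [P.part_eq_of_mem hB (hCB hv)]
  exact hCB (hK.apply_mem hP hC hv hvX)

lemma le_card_sdiff_of_not_subset (hK : IsOddBarrier G X K) (hP : IsMatchedPartition G P o)
    (hreg : G.IsRegularOfDegree k) (hC : C ∈ K) (hB : B ∈ P.parts) (h : ¬ B \ C ⊆ X) :
    k ≤ #(B \ C) := by
  obtain ⟨v, hv, hvX⟩ := not_subset.1 h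
  obtain ⟨hvB, hvC⟩ := mem_sdiff.1 hv
  have hdeg := hP.card_interedges_part_add_one hreg v
  rw [P.part_eq_of_mem hB hvB, card_interedges_singleton_left] at hdeg
  have hloop : v ∉ ({w ∈ B | G.Adj v w} : Finset V) := fun hmem ↦ (mem_filter.1 hmem).2.ne rfl
  rw [← hdeg, ← card_insert_of_notMem hloop]
  refine card_le_card (insert_subset hv fun w hw ↦ ?_)
  obtain ⟨hwB, hvw⟩ := mem_filter.1 hw
  refine mem_sdiff.2 ⟨hwB, fun hwC ↦ ?_⟩
  have := hK.neighborhood_subset C hC (mem_neighborhood.2 ⟨w, hwC, hvw.symm⟩)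
  exact (mem_union.1 this).elim hvX hvC

lemma card_filter_mem_splitParts_le_one (hK : IsOddBarrier G X K) (hC : C ∈ K)
    (hBC : B \ C ⊆ X) : #{D ∈ K | B ∈ splitParts P D} ≤ 1 := by
  refine (card_le_card fun D hD ↦ ?_).trans (card_singleton C).le
  obtain ⟨hDK, hBD⟩ := mem_filter.1 hD
  obtain ⟨-, ⟨v, hv⟩, -⟩ := mem_filter.1 hBD
  obtain ⟨hvB, hvD⟩ := mem_inter.1 hv
  refine mem_singleton.2 (hK.pairwiseDisjoint.elim_finset hDK hC v hvD ?_)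
  by_contra hvC
  exact Finset.disjoint_left.1 (hK.disjoint D hDK) (hBC (mem_sdiff.2 ⟨hvB, hvC⟩)) hvD

/-- As `C \ B` is a union of parts, its cut makes `B ∩ C` large and hence `B \ C` small, which puts
`B \ C` inside `X`, where it is charged by `C` alone. The charging leaves room for few such
vertices, so the cut of the union of parts `C ∪ B` is too small. -/
lemma matchCount_ne_one_of_card_splitParts_eq_one (hK : IsOddBarrier G X K)
    (hP : IsMatchedPartition G P o) (hreg : G.IsRegularOfDegree k) (hk : 5 ≤ k)
    (hsize : ∀ B ∈ P.parts, #B + 3 ≤ 2 * k)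
    (hcut : ∀ Z : Finset V, Z.Nonempty → Z ≠ univ → k ≤ cutSize G Z) (hX : 4 ≤ #X)
    (hpieces : #X ≤ ∑ C ∈ K, #(splitParts P C) + 2) (hC : C ∈ K) (hC1 : #C ≠ 1)
    (hsplit : #(splitParts P C) = 1) : matchCount o C X ≠ 1 := by
  intro hone
  obtain ⟨B, hCB⟩ := card_eq_one.1 hsplit
  have hB : B ∈ P.parts := (mem_filter.1 (hCB ▸ mem_singleton_self B)).1
  have hout : (C \ B).Nonempty := sdiff_nonempty.2 fun hsub ↦
    hC1 (hK.matchCount_eq_card_of_subset hP hC hB hsub ▸ hone)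
  have hinter := hK.le_matchCount_add_card_inter hP hcut (card_pos.1 (by omega)) hC hB hCB.le hout
  have hcard := card_inter_add_card_sdiff B C
  have hsizeB := hsize B hB
  have hsub : B \ C ⊆ X := by
    by_contra h
    have := hK.le_card_sdiff_of_not_subset hP hreg hC hB h
    omega
  have hle : #(B \ C) ≤ #(B ∩ X) := card_le_card (subset_inter sdiff_subset hsub)
  have honly := hK.card_filter_mem_splitParts_le_one (P := P) hC hsub
  have hexcess := hK.card_inter_add_sum_card_splitParts_le hP hreg (by omega)
    (fun B hB ↦ by have := hsize B hB; omega) hB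
  have := hK.le_matchCount_add_card_sdiff hP hcut hC hB hCB.le (by omega)
  omega

/-- Both `B ∩ C` and `B \ C` have at least two vertices, so at least `2 (k - 2)` edges join them:
almost twice the `k - 1` edges that a split part contributes in general. -/
lemma matchCount_ne_three_of_card_splitParts_eq_one (hK : IsOddBarrier G X K)
    (hP : IsMatchedPartition G P o) (hreg : G.IsRegularOfDegree k) (hk : 5 ≤ k)
    (hsize : ∀ B ∈ P.parts, #B + 3 ≤ 2 * k)
    (hcut : ∀ Z : Finset V, Z.Nonempty → Z ≠ univ → k ≤ cutSize G Z) (hX : 4 ≤ #X)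
    (hXX : 3 ≤ ∑ B ∈ P.parts, #(G.interedges (B ∩ X) (B ∩ X)))
    (hpieces : #X ≤ ∑ C ∈ K, #(splitParts P C) + 1) (hC : C ∈ K) (hC1 : #C ≠ 1)
    (hsplit : #(splitParts P C) = 1) : matchCount o C X ≠ 3 := by
  intro hthree
  obtain ⟨B, hCB⟩ := card_eq_one.1 hsplit
  have hB : B ∈ P.parts := (mem_filter.1 (hCB ▸ mem_singleton_self B)).1
  have hsizeB := hsize B hB
  have hinter : 2 ≤ #(B ∩ C) := by
    by_cases hsub : C ⊆ B
    · have := hK.three_le_card hC hC1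
      rw [inter_eq_right.2 hsub]
      omega
    · have := hK.le_matchCount_add_card_inter hP hcut (card_pos.1 (by omega)) hC hB hCB.le
        (sdiff_nonempty.2 hsub)
      omega
  have hdiff : 2 ≤ #(B \ C) := by
    by_contra! hlt
    have := hK.le_matchCount_add_card_sdiff hP hcut hC hB hCB.le (by omega)
    omega
  have hBC := hP.mul_sub_le_card_interedges_inter_sdiff hreg hB hinter hdiff (by omega)
  have hothers : (∑ D ∈ K.erase C, #(splitParts P D)) * (k - 1) ≤
      ∑ D ∈ K.erase C, ∑ B ∈ splitParts P D, #(G.interedges (B ∩ D) (B \ D)) := by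
    rw [sum_mul]
    exact sum_le_sum fun D _ ↦ card_nsmul_le_sum _ _ _ fun B hB ↦
      hP.sub_one_le_card_interedges_of_mem_splitParts hreg
        (fun B hB ↦ by have := hsize B hB; omega) hB
  have htotal := hK.sum_splitParts_card_interedges_add_le hP hreg
  rw [← add_sum_erase _ _ hC, hCB, sum_singleton] at htotal
  rw [← add_sum_erase _ _ hC, hsplit] at hpieces
  have hmul := Nat.mul_le_mul_left (k - 1) hpieces
  rw [Nat.mul_add, Nat.mul_add] at hmul
  rw [mul_comm] at hothers
  omega

lemma matchCount_add_matchCount_add_matchCount_le (hK : IsOddBarrier G X K)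
    (hP : IsMatchedPartition G P o) (hXK : #X ≤ #K + 2) (hC : C ∈ K) (hD : D ∈ K)
    (hCD : C ≠ D) : matchCount o C X + matchCount o D X + matchCount o X X ≤ 4 := by
  have htwo := add_add_card_le_sum_add_two (fun C hC ↦ (hK.odd_matchCount hP hC).pos) hC hD hCD
  have htotal := hK.sum_matchCount_add_matchCount_le hP
  omega

lemma card_add_card_add_card_le_sum_splitParts (hK : IsOddBarrier G X K)
    (hP : IsMatchedPartition G P o) (hk : 4 ≤ k)
    (hcut : ∀ Z : Finset V, Z.Nonempty → Z ≠ univ → k ≤ cutSize G Z) (hX : X.Nonempty)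
    (hXK : #X ≤ #K + 2) (hC : C ∈ K) (hD : D ∈ K) (hCD : C ≠ D) :
    #(splitParts P C) + #(splitParts P D) + #K ≤ ∑ C ∈ K, #(splitParts P C) + 2 := by
  refine add_add_card_le_sum_add_two (f := fun C ↦ #(splitParts P C)) (fun A hA ↦ ?_) hC hD hCD
  obtain ⟨B, hB, hAB⟩ := exists_mem_ne (one_lt_card.2 ⟨C, hC, D, hD, hCD⟩) A
  have hle := hK.matchCount_add_matchCount_add_matchCount_le hP hXK hA hB hAB.symm
  have hpos := (hK.odd_matchCount hP hB).pos
  exact (hK.splitParts_nonempty hP hcut hX hA (by omega)).card_pos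

lemma card_splitParts_ne_one (hK : IsOddBarrier G X K) (hP : IsMatchedPartition G P o)
    (hreg : G.IsRegularOfDegree k) (hk : 5 ≤ k) (hsize : ∀ B ∈ P.parts, #B + 3 ≤ 2 * k)
    (hcut : ∀ Z : Finset V, Z.Nonempty → Z ≠ univ → k ≤ cutSize G Z) (hX : 4 ≤ #X)
    (hXX : 4 ≤ #(G.interedges X X)) (hXK : #X ≤ #K + 2) (hC : C ∈ K) (hC1 : #C ≠ 1)
    (hD : D ∈ K) (hD1 : #D ≠ 1) (hCD : C ≠ D) : #(splitParts P C) ≠ 1 := by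
  intro hsplit
  have hXne : X.Nonempty := card_pos.1 (by omega)
  have hpieces :=
    hK.card_add_card_add_card_le_sum_splitParts hP (by omega) hcut hXne hXK hC hD hCD
  have hmatch := hK.matchCount_add_matchCount_add_matchCount_le hP hXK hC hD hCD
  have hinner := hP.card_interedges_le X X
  have hoddC := hK.odd_matchCount hP hC
  have hoddD := hK.odd_matchCount hP hD
  have hDpos : 1 ≤ #(splitParts P D) :=
    (hK.splitParts_nonempty hP hcut hXne hD (by omega)).card_pos
  have hCne := hK.matchCount_ne_one_of_card_splitParts_eq_one hP hreg hk hsize hcut hX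
    (by omega) hC hC1 hsplit
  rw [Nat.odd_iff] at hoddC hoddD
  have hCthree : matchCount o C X = 3 := by omega
  have hDone : matchCount o D X = 1 := by omega
  have hDne : #(splitParts P D) ≠ 1 := fun h ↦
    hK.matchCount_ne_one_of_card_splitParts_eq_one hP hreg hk hsize hcut hX
      (by omega) hD hD1 h hDone
  exact hK.matchCount_ne_three_of_card_splitParts_eq_one hP hreg hk hsize hcut hX
    (by omega) (by omega) hC hC1 hsplit hCthree

lemma not_isMatchedPartition (hK : IsOddBarrier G X K) (hreg : G.IsRegularOfDegree k)
    (hk : 5 ≤ k) (hexp : IsExpanding G 4) (hsize : ∀ B ∈ P.parts, #B + 3 ≤ 2 * k)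
    (hcut : ∀ Z : Finset V, Z.Nonempty → Z ≠ univ → k ≤ cutSize G Z) (hX : 4 ≤ #X)
    (hXX : 4 ≤ #(G.interedges X X)) (hXK : #X ≤ #K + 2) : ¬ IsMatchedPartition G P o := by
  intro hP
  obtain ⟨C, hC, D, hD, hCD⟩ :=
    one_lt_card.1 (hK.two_le_card_filter_card_ne_one hexp hX (by omega))
  rw [mem_filter] at hC hD
  have hXne : X.Nonempty := card_pos.1 (by omega)
  have hpieces :=
    hK.card_add_card_add_card_le_sum_splitParts hP (by omega) hcut hXne hXK hC.1 hD.1 hCD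
  have hmatch := hK.matchCount_add_matchCount_add_matchCount_le hP hXK hC.1 hD.1 hCD
  have hinner := hP.card_interedges_le X X
  have hoddC := (hK.odd_matchCount hP hC.1).pos
  have hoddD := (hK.odd_matchCount hP hD.1).pos
  have hCne := hK.card_splitParts_ne_one hP hreg hk hsize hcut hX hXX hXK hC.1 hC.2 hD.1 hD.2 hCD
  have hDne :=
    hK.card_splitParts_ne_one hP hreg hk hsize hcut hX hXX hXK hD.1 hD.2 hC.1 hC.2 hCD.symm
  have hCpos := (hK.splitParts_nonempty hP hcut hXne hC.1 (by omega)).card_pos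
  have hDpos := (hK.splitParts_nonempty hP hcut hXne hD.1 (by omega)).card_pos
  have hcharge := hK.mul_sum_card_splitParts_add_le hP hreg
    fun B hB ↦ by have := hsize B hB; omega
  have := Nat.mul_le_mul_left (k - 1) (show #X ≤ ∑ C ∈ K, #(splitParts P C) by omega)
  omega

end IsOddBarrier

end SmallCuts

lemma IsOddBarrier.card_add_two_lt [Fintype V] [DecidableEq V] [DecidableRel G.Adj] {X : Finset V}
    {K : Finset (Finset V)} {k : ℕ} (hK : IsOddBarrier G X K) (hconn : G.Connected)
    (hvt : VertexTransitive G) (hnb : ¬ G.Colorable 2) (heven : Even (Fintype.card V))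
    (hreg : G.IsRegularOfDegree k) (hk : 5 ≤ k) (hX : 4 ≤ #X)
    (hXX : 4 ≤ #(G.interedges X X)) : #K + 2 < #X := by
  by_contra! hXK
  have hexp := isExpanding_four hconn hvt hnb heven hreg hk
  obtain hcut | ⟨P, o, hP, hsize, hcut⟩ :=
    two_mul_le_cutSize_add_two_or_exists_isMatchedPartition hconn hvt hreg
  · obtain ⟨Z, hZ, hZn, hlt⟩ := hK.exists_cutSize_add_two_lt hreg hk hexp
      (fun hk S hS ↦ hS.even_card hconn hvt hnb heven hreg hk) hX hXX hXK
    exact hlt.not_ge (hcut Z hZ hZn)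
  · exact hK.not_isMatchedPartition hreg hk hexp hsize hcut hX hXX hXK hP

end TwoExtendable

/-- Every connected vertex-transitive non-bipartite simple graph
of even order at least 6 whose common degree is at least 5 is 2-extendable. -/
theorem statement1 {V : Type*} [Fintype V] [DecidableEq V]
    (G : SimpleGraph V) [DecidableRel G.Adj] (k : ℕ)
    (hconn : G.Connected) (hvt : VertexTransitive G) (hnb : ¬ G.Colorable 2)
    (heven : Even (Fintype.card V)) (hcard : 6 ≤ Fintype.card V)
    (hreg : G.IsRegularOfDegree k) (hk : 5 ≤ k) :
    Extendable G 2 := by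
  have := hconn.nonempty
  have hext (M : G.Subgraph) (hM : M.IsMatching) (htwo : M.edgeSet.ncard = 2) :
      ∃ P : G.Subgraph, P.IsPerfectMatching ∧ M ≤ P := by
    by_contra hno
    have hverts := TwoExtendable.ncard_verts_of_isMatching hM
    obtain ⟨X, K, hK, hMX, hXK⟩ :=
      TwoExtendable.exists_isOddBarrier_of_not_exists_isPerfectMatching_ge heven hM hno
    have hX : M.verts.ncard ≤ X.card := by
      simpa only [Set.ncard_coe_finset] using Set.ncard_le_ncard hMX
    have hXX := TwoExtendable.ncard_verts_le_card_interedges hM hMX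
    have hlt := hK.card_add_two_lt hconn hvt hnb heven hreg hk (by omega) (by omega)
    omega
  obtain ⟨M, hM, htwo⟩ := TwoExtendable.exists_isMatching_ncard_edgeSet_eq (G := G) 2
    fun v ↦ by rw [hreg v]; omega
  obtain ⟨P, hP, -⟩ := hext M hM htwo
  exact ⟨⟨P, hP⟩, hext⟩
end

section
/- Let G be a connected triangle-free vertex-transitive 6-regular simple graph of even order. If there exist 3 distinct vertices of G having the same neighborhood, then G is bipartite. -/
open SimpleGraph

/-!
Let `G` be `d`-regular and identify vertices with equal neighborhoods. If every class has `m`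
vertices, then `G` is obtained from the connected quotient graph `Q` by replacing each vertex by `m`
independent copies, so `Q` is regular of degree `d / m < 3` and `|V| = |Q| * m`. Hence `Q` is
acyclic or a cycle. In the second case `d = 2 * m`, so `m` is odd because `4 ∤ d`, and the cycle has
even length because `|V|` is even. Either way `Q` is bipartite, and a 2-coloring of `Q` pulls back
to `G`.
-/

open Function

section Copies

variable {U W : Type*} {H : SimpleGraph U} {G : SimpleGraph W} [H.LocallyFinite] [G.LocallyFinite]

theorem image_neighborSet_of_degree_le (f : H.Copy G) {u : U} (hf : G.degree (f u) ≤ H.degree u) :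
    f '' H.neighborSet u = G.neighborSet (f u) := by
  apply Set.eq_of_subset_of_ncard_le (f.toHom.image_neighborSet_subset u)
  rwa [Set.ncard_image_of_injective _ f.injective, Set.ncard_eq_toFinset_card',
    Set.ncard_eq_toFinset_card']

theorem nonempty_iso_of_degree_le [Nonempty U] (hG : G.Preconnected) (f : H.Copy G)
    (hf : ∀ u, G.degree (f u) ≤ H.degree u) : Nonempty (H ≃g G) := by
  have lift_adj {u : U} {w : W} (h : G.Adj (f u) w) : ∃ u', H.Adj u u' ∧ f u' = w :=
    (image_neighborSet_of_degree_le f (hf u)).ge h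
  have hsurj : Surjective f := by
    intro w
    by_contra hw
    obtain ⟨u⟩ := ‹Nonempty U›
    obtain ⟨p⟩ := hG (f u) w
    obtain ⟨e, -, ⟨u', hu'⟩, hsnd⟩ := p.exists_boundary_dart (Set.range f) ⟨u, rfl⟩ hw
    obtain ⟨u'', -, hu''⟩ := lift_adj (hu' ▸ e.adj)
    exact hsnd ⟨u'', hu''⟩
  refine ⟨⟨Equiv.ofBijective f ⟨f.injective, hsurj⟩, fun {u v} ↦ ⟨fun h ↦ ?_, f.toHom.map_adj⟩⟩⟩
  obtain ⟨v', huv', hv'⟩ := lift_adj h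
  rwa [← f.injective hv']

theorem exists_cycleGraph_iso_of_degree_le_two (hG : G.Preconnected) (hdeg : ∀ v, G.degree v ≤ 2)
    (hcyc : ¬ G.IsAcyclic) : ∃ n, Nonempty (cycleGraph (n + 3) ≃g G) := by
  simp only [isAcyclic_iff_free_cycleGraph, not_forall, Free, not_not] at hcyc
  obtain ⟨k, hk, ⟨f⟩⟩ := hcyc
  obtain ⟨n, rfl⟩ := Nat.exists_eq_add_of_le' hk
  exact ⟨n, nonempty_iso_of_degree_le hG f fun u ↦
    (hdeg (f u)).trans_eq cycleGraph_degree_three_le.symm⟩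

end Copies

theorem ncard_preimage_of_ncard_fiber_eq {α β : Type*} {f : α → β} {m : ℕ} (hm : m ≠ 0)
    (hf : ∀ b, (f ⁻¹' {b}).ncard = m) (s : Set β) : (f ⁻¹' s).ncard = s.ncard * m := by
  have fiber_equiv (b : β) : Nonempty ({a // f a = b} ≃ Fin m) :=
    have : Finite {a // f a = b} := Set.finite_of_ncard_ne_zero (hf b ▸ hm)
    ⟨Finite.equivFinOfCardEq (hf b)⟩
  let e : α ≃ β × Fin m := (Equiv.sigmaFiberEquiv f).symm.trans
    (Equiv.sigmaEquivProdOfEquiv fun b ↦ (fiber_equiv b).some)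
  calc (f ⁻¹' s).ncard = (e ⁻¹' (s ×ˢ Set.univ)).ncard := by rw [Set.prod_univ]; rfl
    _ = (s ×ˢ (Set.univ : Set (Fin m))).ncard :=
      Set.ncard_preimage_of_injective_subset_range e.injective (by simp)
    _ = s.ncard * m := by rw [Set.ncard_prod, Set.ncard_univ, Nat.card_fin]

section Twins

variable {V : Type*} {G : SimpleGraph V}

/-- Two vertices are twins if they have the same neighborhood. -/
def twinSetoid (G : SimpleGraph V) : Setoid V := Setoid.ker G.neighborSet

/-- The set of twins of `v`, with `v` itself included. -/
def twinClass (G : SimpleGraph V) (v : V) : Set V := {w | G.neighborSet w = G.neighborSet v}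

/-- The graph obtained by identifying twins. Adjacency of two classes does not depend on the
chosen representatives, so `G` is the pullback of this graph along the quotient map. -/
def twinQuotient (G : SimpleGraph V) : SimpleGraph (Quotient (twinSetoid G)) where
  Adj := Quotient.lift₂ G.Adj fun v w v' w' (hv : G.neighborSet v = G.neighborSet v')
      (hw : G.neighborSet w = G.neighborSet w') ↦ by
    rw [← mem_neighborSet, hv, mem_neighborSet, adj_comm, ← mem_neighborSet, hw, mem_neighborSet,
      adj_comm]
  symm := ⟨Quotient.ind₂ fun _ _ ↦ Adj.symm⟩
  loopless := ⟨Quotient.ind fun _ ↦ G.irrefl⟩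

/-- The quotient map, as a graph homomorphism. -/
def twinQuotientHom (G : SimpleGraph V) : G →g twinQuotient G :=
  ⟨Quotient.mk (twinSetoid G), id⟩

theorem preimage_neighborSet_twinQuotientHom (v : V) :
    twinQuotientHom G ⁻¹' (twinQuotient G).neighborSet (twinQuotientHom G v) = G.neighborSet v :=
  rfl

theorem preimage_singleton_twinQuotientHom (v : V) :
    twinQuotientHom G ⁻¹' {twinQuotientHom G v} = twinClass G v :=
  Set.ext fun _ ↦ Quotient.eq (r := twinSetoid G)

theorem surjective_twinQuotientHom : Surjective (twinQuotientHom G) := Quotient.mk_surjective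

noncomputable instance [G.LocallyFinite] : (twinQuotient G).LocallyFinite := fun q ↦ by
  apply Set.Finite.fintype
  obtain ⟨v, rfl⟩ := surjective_twinQuotientHom q
  apply Set.Finite.of_preimage _ surjective_twinQuotientHom
  exact (G.neighborSet v).toFinite

theorem image_twinClass_iso {W : Type*} {H : SimpleGraph W} (φ : G ≃g H) (v : V) :
    φ '' twinClass G v = twinClass H (φ v) := by
  ext w
  obtain ⟨u, rfl⟩ := φ.surjective w
  simp only [φ.injective.mem_set_image, twinClass, Set.mem_ofPred_eq, Set.ext_iff,
    φ.surjective.forall, mem_neighborSet, φ.map_adj_iff]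

theorem ncard_twinClass_eq_of_vertexTransitive (hG : VertexTransitive G) (v w : V) :
    (twinClass G v).ncard = (twinClass G w).ncard := by
  obtain ⟨φ, rfl⟩ := hG v w
  rw [← image_twinClass_iso, Set.ncard_image_of_injective _ φ.injective]

theorem ncard_preimage_twinQuotientHom {m : ℕ} (hm₀ : m ≠ 0)
    (hm : ∀ v, (twinClass G v).ncard = m) (s : Set (Quotient (twinSetoid G))) :
    (twinQuotientHom G ⁻¹' s).ncard = s.ncard * m :=
  ncard_preimage_of_ncard_fiber_eq hm₀ (surjective_twinQuotientHom.forall.2 fun v ↦ by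
    rw [preimage_singleton_twinQuotientHom, hm]) s

theorem degree_twinQuotient_mul [G.LocallyFinite] {m : ℕ} (hm₀ : m ≠ 0)
    (hm : ∀ v, (twinClass G v).ncard = m) (v : V) :
    (twinQuotient G).degree (twinQuotientHom G v) * m = G.degree v := by
  have := ncard_preimage_twinQuotientHom hm₀ hm
    ((twinQuotient G).neighborSet (twinQuotientHom G v))
  rwa [preimage_neighborSet_twinQuotientHom, Set.ncard_eq_toFinset_card',
    Set.ncard_eq_toFinset_card', eq_comm] at this

theorem card_twinQuotient_mul {m : ℕ} (hm₀ : m ≠ 0) (hm : ∀ v, (twinClass G v).ncard = m) :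
    Nat.card (Quotient (twinSetoid G)) * m = Nat.card V := by
  rw [← Set.ncard_univ, ← ncard_preimage_twinQuotientHom hm₀ hm, Set.preimage_univ, Set.ncard_univ]

end Twins

theorem statement6_general {V : Type*} (G : SimpleGraph V) [G.LocallyFinite] {d m : ℕ}
    (hconn : G.Preconnected) (hreg : G.IsRegularOfDegree d) (hd : ¬ 4 ∣ d)
    (heven : Finite V → Even (Nat.card V)) (hm : ∀ v, (twinClass G v).ncard = m)
    (hdm : d < 3 * m) : G.Colorable 2 := by
  have hm₀ : m ≠ 0 := by omega
  have hQ : (twinQuotient G).Preconnected :=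
    hconn.map (twinQuotientHom G) surjective_twinQuotientHom
  have hdeg : ∀ q, (twinQuotient G).degree q * m = d := surjective_twinQuotientHom.forall.2
    fun v ↦ (degree_twinQuotient_mul hm₀ hm v).trans (hreg v)
  suffices (twinQuotient G).Colorable 2 from this.of_hom (twinQuotientHom G)
  by_cases hcyc : (twinQuotient G).IsAcyclic
  · exact hcyc.isBipartite
  have hdeg_le (q) : (twinQuotient G).degree q ≤ 2 := by
    by_contra! h
    exact (hdm.trans_le (Nat.mul_le_mul_right m h)).ne' (hdeg q)
  obtain ⟨n, ⟨e⟩⟩ := exists_cycleGraph_iso_of_degree_le_two hQ hdeg_le hcyc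
  have hd_eq : 2 * m = d := by
    rw [← hdeg (e 0), e.degree_eq, cycleGraph_degree_three_le]
  have hcard : (n + 3) * m = Nat.card V := by
    rw [← card_twinQuotient_mul hm₀ hm, ← Nat.card_congr e.toEquiv, Nat.card_fin]
  have hfin : Finite V := Nat.finite_of_card_ne_zero (by rw [← hcard]; positivity)
  have hm_odd : ¬ Even m := fun ⟨k, hk⟩ ↦ hd ⟨k, by omega⟩
  have hn : Even (n + 3) := (Nat.even_mul.1 (hcard ▸ heven hfin)).resolve_right hm_odd
  exact (cycleGraph.bicoloring_of_even _ hn).colorable.of_hom e.symm.toHom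

/-- A connected triangle-free vertex-transitive 6-regular graph
of even order with three distinct vertices having the same neighborhood is
bipartite. -/
theorem statement6 {V : Type*} [Fintype V] [DecidableEq V]
    (G : SimpleGraph V) [DecidableRel G.Adj]
    (hconn : G.Connected) (htri : G.CliqueFree 3) (hvt : VertexTransitive G)
    (hreg : G.IsRegularOfDegree 6) (heven : Even (Fintype.card V))
    (a b c : V) (hab : a ≠ b) (hac : a ≠ c) (hbc : b ≠ c)
    (h1 : G.neighborSet a = G.neighborSet b) (h2 : G.neighborSet b = G.neighborSet c) :
    G.Colorable 2 := by
  have htwins : 2 < (twinClass G a).ncard :=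
    (Set.two_lt_ncard).2 ⟨a, rfl, b, h1.symm, c, (h1.trans h2).symm, hab, hac, hbc⟩
  exact statement6_general G hconn.preconnected hreg (by norm_num)
    (fun _ ↦ by rwa [Nat.card_eq_fintype_card])
    (fun v ↦ ncard_twinClass_eq_of_vertexTransitive hvt v a) (by omega)
end

section
/- Let G be a connected triangle-free vertex-transitive simple graph of degree k ≥ 5, let s be an integer with 4 ≤ s ≤ 8, suppose λ_s(G) exists and λ_s(G) ≤ 3k, and let S and T be two distinct λ_s-atoms of G with S ∩ T ≠ ∅. Then d_G(S ∩ T) + d_G(S ∪ T) ≤ 2λ_s(G), d_G(S \ T) + d_G(T \ S) ≤ 2λ_s(G), |S ∩ T| ≤ s − 1, and |S \ T| ≤ s − 1. -/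
open SimpleGraph

/-!
The boundary size `d(X) = |∇(X)|` is submodular and invariant under complement, which gives the two
inequalities. In a triangle-free graph of minimum degree at least `k`, Mantel's theorem bounds the
edges inside `X`, so `d(X) ≥ k|X| - |X|²/2`; hence for `k ≥ 5` two nonempty sets of at most seven
vertices each, at least four in total and with no edges between them, have boundaries of total size
greater than `3k`.

Let `X` minimize `d` among the sets with at least `s` vertices on both sides, with `d(X) ≤ 3k`, and
let `A` be a component of `G - ∇(X)` with fewer than `s` vertices, say `A ⊆ X`. Then
`d(X) = d(A) + d(X \ A)`, which contradicts minimality if `X \ A` has at least `s` vertices, and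
`d(X) ≤ 3k` otherwise. Hence `∇(X)` is an `s`-restricted edge-cut. Consequently `d ≥ λ_s` on all
sets with at least `s` vertices on both sides, and `d > λ_s` on those properly contained in an atom.
If `S ∩ T` had `s` vertices, this would apply to `S ∩ T ⊂ S` and to `S ∪ T`, so that
`d(S ∩ T) + d(S ∪ T) > 2λ_s`. If `S \ T` had `s` vertices, so would `T \ S`, which has the same
size, and both would have boundaries larger than `λ_s`.
-/

section EdgeBoundary

variable {V : Type*} {G : SimpleGraph V} {A X : Set V} {s : ℕ} {x y : V}

theorem mk_mem_inducedEdgeBoundary :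
    s(x, y) ∈ inducedEdgeBoundary G X A ↔
      G.Adj x y ∧ (x ∈ A ∧ y ∈ X \ A ∨ y ∈ A ∧ x ∈ X \ A) := by
  constructor
  · rintro ⟨hadj, a, ha, b, hb, hab⟩
    rcases Sym2.eq_iff.1 hab with ⟨rfl, rfl⟩ | ⟨rfl, rfl⟩
    · exact ⟨hadj, .inl ⟨ha, hb⟩⟩
    · exact ⟨hadj, .inr ⟨ha, hb⟩⟩
  · rintro ⟨hadj, ⟨hx, hy⟩ | ⟨hy, hx⟩⟩
    · exact ⟨hadj, x, hx, y, hy, rfl⟩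
    · exact ⟨hadj, y, hy, x, hx, Sym2.eq_swap⟩

variable (G X) in
theorem edgeBoundary_eq_inducedEdgeBoundary_univ :
    edgeBoundary G X = inducedEdgeBoundary G Set.univ X := by
  simp only [edgeBoundary, inducedEdgeBoundary, Set.compl_eq_univ_sdiff]

theorem mk_mem_edgeBoundary :
    s(x, y) ∈ edgeBoundary G X ↔ G.Adj x y ∧ (x ∈ X ∧ y ∉ X ∨ y ∈ X ∧ x ∉ X) := by
  simp only [edgeBoundary_eq_inducedEdgeBoundary_univ, mk_mem_inducedEdgeBoundary, Set.mem_sdiff,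
    Set.mem_univ, true_and]

variable (G X) in
theorem edgeBoundary_compl : edgeBoundary G Xᶜ = edgeBoundary G X := by
  ext ⟨x, y⟩
  simp only [mk_mem_edgeBoundary, Set.mem_compl_iff]
  tauto

theorem mem_of_reachable_deleteEdges_edgeBoundary
    (h : (G.deleteEdges (edgeBoundary G X)).Reachable x y) (hx : x ∈ X) : y ∈ X := by
  obtain ⟨walk⟩ := h
  induction walk with
  | nil => exact hx
  | cons hadj _ ih =>
    refine ih (by_contra fun hv ↦ ?_)
    rw [deleteEdges_adj] at hadj
    exact hadj.2 (mk_mem_edgeBoundary.2 ⟨hadj.1, .inl ⟨hx, hv⟩⟩)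

theorem supp_subset_of_mem_deleteEdges_edgeBoundary
    {c : (G.deleteEdges (edgeBoundary G X)).ConnectedComponent}
    (hxc : x ∈ c.supp) (hx : x ∈ X) : c.supp ⊆ X := fun _ hyc ↦
  mem_of_reachable_deleteEdges_edgeBoundary (c.reachable_of_mem_supp hxc hyc) hx

theorem inducedEdgeBoundary_supp_eq_empty
    (c : (G.deleteEdges (edgeBoundary G X)).ConnectedComponent) (hc : c.supp ⊆ X) :
    inducedEdgeBoundary G X c.supp = ∅ := by
  refine Set.eq_empty_of_forall_notMem ?_
  rintro _ ⟨hadj, x, hx, y, ⟨hyX, hyc⟩, rfl⟩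
  refine hyc (c.mem_supp_of_adj_mem_supp hx ?_)
  rw [deleteEdges_adj, mk_mem_edgeBoundary]
  exact ⟨hadj, fun ⟨_, h⟩ ↦ h.elim (fun h ↦ h.2 hyX) (fun h ↦ h.2 (hc hx))⟩

theorem le_ncard_supp_of_mem_deleteEdges_edgeBoundary
    (hparts : ∀ A ⊆ X, A.Nonempty → inducedEdgeBoundary G X A = ∅ → s ≤ A.ncard)
    (c : (G.deleteEdges (edgeBoundary G X)).ConnectedComponent) (hxc : x ∈ c.supp) (hx : x ∈ X) :
    s ≤ c.supp.ncard :=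
  have hcX := supp_subset_of_mem_deleteEdges_edgeBoundary hxc hx
  hparts c.supp hcX ⟨x, hxc⟩ (inducedEdgeBoundary_supp_eq_empty c hcX)

theorem isRestrictedEdgeCut_edgeBoundary (hX : X.Nonempty) (hXc : Xᶜ.Nonempty)
    (hparts : ∀ A ⊆ X, A.Nonempty → inducedEdgeBoundary G X A = ∅ → s ≤ A.ncard)
    (hparts_compl : ∀ A ⊆ Xᶜ, A.Nonempty → inducedEdgeBoundary G Xᶜ A = ∅ → s ≤ A.ncard) :
    IsRestrictedEdgeCut G s (edgeBoundary G X) := by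
  refine ⟨fun _ he ↦ he.1, fun hconn ↦ ?_, fun c ↦ ?_⟩
  · obtain ⟨x, hx⟩ := hX
    obtain ⟨y, hy⟩ := hXc
    exact hy (mem_of_reachable_deleteEdges_edgeBoundary (hconn.preconnected x y) hx)
  · obtain ⟨v, hv⟩ := c.nonempty_supp
    by_cases hvX : v ∈ X
    · exact le_ncard_supp_of_mem_deleteEdges_edgeBoundary hparts c hv hvX
    · have hcompl := le_ncard_supp_of_mem_deleteEdges_edgeBoundary (x := v) hparts_compl
      rw [edgeBoundary_compl] at hcompl
      exact hcompl c hv hvX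

end EdgeBoundary

section Uncrossing

variable {V : Type*} [Finite V] (G : SimpleGraph V)

theorem ncard_edgeBoundary_inter_add_union_le (S T : Set V) :
    (edgeBoundary G (S ∩ T)).ncard + (edgeBoundary G (S ∪ T)).ncard ≤
      (edgeBoundary G S).ncard + (edgeBoundary G T).ncard := by
  have hunion : edgeBoundary G (S ∩ T) ∪ edgeBoundary G (S ∪ T) ⊆
      edgeBoundary G S ∪ edgeBoundary G T := by
    rintro ⟨x, y⟩
    simp only [Set.mem_union, mk_mem_edgeBoundary, Set.mem_inter_iff]
    tauto
  have hinter : edgeBoundary G (S ∩ T) ∩ edgeBoundary G (S ∪ T) ⊆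
      edgeBoundary G S ∩ edgeBoundary G T := by
    rintro ⟨x, y⟩
    simp only [Set.mem_union, mk_mem_edgeBoundary, Set.mem_inter_iff]
    tauto
  rw [← Set.ncard_union_add_ncard_inter, ← Set.ncard_union_add_ncard_inter (edgeBoundary G S)]
  exact add_le_add (Set.ncard_le_ncard hunion) (Set.ncard_le_ncard hinter)

theorem ncard_edgeBoundary_sdiff_add_sdiff_le (S T : Set V) :
    (edgeBoundary G (S \ T)).ncard + (edgeBoundary G (T \ S)).ncard ≤
      (edgeBoundary G S).ncard + (edgeBoundary G T).ncard := by
  have hcompl : (S ∪ Tᶜ)ᶜ = T \ S := by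
    rw [Set.compl_union, compl_compl, Set.sdiff_eq_compl_inter]
  simpa only [← Set.sdiff_eq, ← hcompl, edgeBoundary_compl] using
    ncard_edgeBoundary_inter_add_union_le G S Tᶜ

variable {G} in
theorem ncard_edgeBoundary_add_sdiff {A X : Set V} (hAX : A ⊆ X) :
    (edgeBoundary G A).ncard + (edgeBoundary G (X \ A)).ncard =
      (edgeBoundary G X).ncard + 2 * (inducedEdgeBoundary G X A).ncard := by
  have hunion : edgeBoundary G A ∪ edgeBoundary G (X \ A) =
      edgeBoundary G X ∪ inducedEdgeBoundary G X A := by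
    ext ⟨x, y⟩
    have := @hAX x
    have := @hAX y
    simp only [Set.mem_union, mk_mem_edgeBoundary, mk_mem_inducedEdgeBoundary, Set.mem_sdiff]
    tauto
  have hinter : edgeBoundary G A ∩ edgeBoundary G (X \ A) = inducedEdgeBoundary G X A := by
    ext ⟨x, y⟩
    simp only [Set.mem_inter_iff, mk_mem_edgeBoundary, mk_mem_inducedEdgeBoundary, Set.mem_sdiff]
    tauto
  have hdisj : Disjoint (edgeBoundary G X) (inducedEdgeBoundary G X A) := by
    rw [Set.disjoint_left]
    rintro ⟨x, y⟩
    have := @hAX x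
    have := @hAX y
    simp only [mk_mem_edgeBoundary, mk_mem_inducedEdgeBoundary, Set.mem_sdiff]
    tauto
  rw [← Set.ncard_union_add_ncard_inter, hunion, hinter, Set.ncard_union_eq hdisj]
  ring

end Uncrossing

section DegreeSum

variable {V : Type*} [DecidableEq V] (G : SimpleGraph V) [G.LocallyFinite] (X : Finset V)

theorem ncard_edgeBoundary_eq_sum :
    (edgeBoundary G X).ncard = ∑ x ∈ X, (G.neighborFinset x \ X).card := by
  have hboundary : edgeBoundary G X =
      X.biUnion fun x ↦ (G.neighborFinset x \ X).image fun y ↦ s(x, y) := by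
    ext e
    simp only [edgeBoundary, Set.mem_ofPred_eq, Set.mem_compl_iff, SetLike.mem_coe,
      Finset.mem_biUnion, Finset.mem_image, Finset.mem_sdiff, mem_neighborFinset]
    constructor
    · rintro ⟨hadj, x, hx, y, hy, rfl⟩
      exact ⟨x, hx, y, ⟨hadj, hy⟩, rfl⟩
    · rintro ⟨x, hx, y, ⟨hadj, hy⟩, rfl⟩
      exact ⟨hadj, x, hx, y, hy, rfl⟩
  have hdisj : (X : Set V).PairwiseDisjoint
      fun x ↦ (G.neighborFinset x \ X).image fun y ↦ s(x, y) := by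
    intro x hx x' hx' hne
    simp only [Function.onFun, Finset.disjoint_left, Finset.mem_image, Finset.mem_sdiff]
    rintro _ ⟨y, hy, rfl⟩ ⟨y', -, heq⟩
    rcases Sym2.eq_iff.1 heq with ⟨rfl, -⟩ | ⟨rfl, -⟩
    · exact hne rfl
    · exact hy.2 hx'
  rw [hboundary, Set.ncard_coe_finset, Finset.card_biUnion hdisj]
  exact Finset.sum_congr rfl fun x _ ↦
    Finset.card_image_of_injective _ fun _ _ ↦ Sym2.congr_right.1

theorem sum_degree_eq_ncard_edgeBoundary_add :
    ∑ x ∈ X, G.degree x =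
      (edgeBoundary G X).ncard + ∑ x ∈ X, (G.neighborFinset x ∩ X).card := by
  simp only [ncard_edgeBoundary_eq_sum, ← Finset.sum_add_distrib,
    Finset.card_sdiff_add_card_inter, card_neighborFinset_eq_degree]

end DegreeSum

section TriangleFree

variable {V : Type*} [Fintype V] {G : SimpleGraph V} [DecidableRel G.Adj] {k : ℕ}

theorem two_mul_sum_degree_le_card_sq_of_cliqueFree_three (htri : G.CliqueFree 3) :
    2 * ∑ v, G.degree v ≤ Fintype.card V ^ 2 := by
  have hturan := htri.card_edgeFinset_le
  dsimp only at hturan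
  rw [Nat.choose_eq_zero_of_lt (Nat.mod_lt _ two_pos)] at hturan
  rw [sum_degrees_eq_twice_card_edges]
  lia

theorem two_mul_sum_card_neighborFinset_inter_le_card_sq [DecidableEq V] (htri : G.CliqueFree 3)
    (X : Finset V) : 2 * ∑ x ∈ X, (G.neighborFinset x ∩ X).card ≤ X.card ^ 2 := by
  have hdegree (x : (X : Set V)) :
      (G.induce (X : Set V)).degree x = (G.neighborFinset x ∩ X).card := by
    rw [← card_neighborFinset_eq_degree, ← Finset.card_map (.subtype (· ∈ (X : Set V)))]
    congr 1
    ext y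
    simp
  have hmantel := two_mul_sum_degree_le_card_sq_of_cliqueFree_three
    (htri.comap (Embedding.induce (X : Set V)).isContained)
  simp only [hdegree] at hmantel
  rw [← Finset.sum_coe_sort X]
  simpa using hmantel

theorem mul_ncard_le_ncard_edgeBoundary_add (htri : G.CliqueFree 3)
    (hdeg : ∀ v, k ≤ G.degree v) (X : Set V) :
    k * X.ncard ≤ (edgeBoundary G X).ncard + X.ncard ^ 2 / 2 := by
  classical
  lift X to Finset V using X.toFinite
  rw [Set.ncard_coe_finset]
  have hmantel := two_mul_sum_card_neighborFinset_inter_le_card_sq htri X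
  have hsum : X.card * k ≤ ∑ x ∈ X, G.degree x := X.card_nsmul_le_sum _ k fun x _ ↦ hdeg x
  rw [sum_degree_eq_ncard_edgeBoundary_add] at hsum
  lia

theorem le_ncard_edgeBoundary_of_ncard_le_seven (htri : G.CliqueFree 3)
    (hdeg : ∀ v, k ≤ G.degree v) (hk : 5 ≤ k) {X : Set V} (hX : X.Nonempty) (hX7 : X.ncard ≤ 7) :
    k ≤ (edgeBoundary G X).ncard := by
  have hbound := mul_ncard_le_ncard_edgeBoundary_add htri hdeg X
  have hpos := hX.ncard_pos
  generalize X.ncard = a at *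
  interval_cases a <;> omega

theorem two_mul_lt_ncard_edgeBoundary_of_ncard_le_seven (htri : G.CliqueFree 3)
    (hdeg : ∀ v, k ≤ G.degree v) (hk : 5 ≤ k) {X : Set V} (hX3 : 3 ≤ X.ncard)
    (hX7 : X.ncard ≤ 7) : 2 * k < (edgeBoundary G X).ncard := by
  have hbound := mul_ncard_le_ncard_edgeBoundary_add htri hdeg X
  generalize X.ncard = a at *
  interval_cases a <;> omega

theorem three_mul_lt_ncard_edgeBoundary_of_split (htri : G.CliqueFree 3)
    (hdeg : ∀ v, k ≤ G.degree v) (hk : 5 ≤ k) {A X : Set V} (hAX : A ⊆ X)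
    (hsplit : inducedEdgeBoundary G X A = ∅) (hX : 4 ≤ X.ncard)
    (hA : A.Nonempty) (hA7 : A.ncard ≤ 7) (hB : (X \ A).Nonempty) (hB7 : (X \ A).ncard ≤ 7) :
    3 * k < (edgeBoundary G X).ncard := by
  have hsum := ncard_edgeBoundary_add_sdiff (G := G) hAX
  rw [hsplit, Set.ncard_empty, mul_zero, add_zero] at hsum
  have hcard := Set.ncard_sdiff_add_ncard_of_subset hAX
  have hkA := le_ncard_edgeBoundary_of_ncard_le_seven htri hdeg hk hA hA7
  have hkB := le_ncard_edgeBoundary_of_ncard_le_seven htri hdeg hk hB hB7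
  rcases le_or_gt 3 A.ncard with hA3 | hA3
  · linarith [two_mul_lt_ncard_edgeBoundary_of_ncard_le_seven htri hdeg hk hA3 hA7]
  rcases le_or_gt 3 (X \ A).ncard with hB3 | hB3
  · linarith [two_mul_lt_ncard_edgeBoundary_of_ncard_le_seven htri hdeg hk hB3 hB7]
  have hA2 : A.ncard = 2 := by lia
  have hB2 : (X \ A).ncard = 2 := by lia
  have hboundA := mul_ncard_le_ncard_edgeBoundary_add htri hdeg A
  have hboundB := mul_ncard_le_ncard_edgeBoundary_add htri hdeg (X \ A)
  rw [hA2] at hboundA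
  rw [hB2] at hboundB
  lia

end TriangleFree

section RestrictedCuts

variable {V : Type*} {G : SimpleGraph V} {s : ℕ} {S T X : Set V}

/-- Both sides of the bipartition `(X, Xᶜ)` have at least `s` vertices. Whether the components of
`G - ∇(X)` are also this large is not required. -/
def HasLargeSides (s : ℕ) (X : Set V) : Prop :=
  s ≤ X.ncard ∧ s ≤ Xᶜ.ncard

theorem HasLargeSides.compl (hX : HasLargeSides s X) : HasLargeSides s Xᶜ :=
  ⟨hX.2, (compl_compl X).symm ▸ hX.1⟩

theorem lambdaS_le_ncard {F : Set (Sym2 V)} (hF : IsRestrictedEdgeCut G s F) :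
    lambdaS G s ≤ F.ncard :=
  Nat.sInf_le ⟨F, hF, rfl⟩

theorem IsLambdaFragment.compl (hX : IsLambdaFragment G s X) : IsLambdaFragment G s Xᶜ := by
  rwa [IsLambdaFragment, edgeBoundary_compl]

theorem IsLambdaAtom.ncard_le_ncard_compl (hS : IsLambdaAtom G s S) : S.ncard ≤ Sᶜ.ncard :=
  hS.2 _ hS.1.compl

theorem IsLambdaAtom.ncard_eq (hS : IsLambdaAtom G s S) (hT : IsLambdaAtom G s T) :
    S.ncard = T.ncard :=
  (hS.2 T hT.1).antisymm (hT.2 S hS.1)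

variable [Finite V]

theorem IsLambdaAtom.inter_ssubset (hS : IsLambdaAtom G s S) (hT : IsLambdaAtom G s T)
    (hne : S ≠ T) : S ∩ T ⊂ S := by
  refine Set.inter_subset_left.ssubset_of_ne fun h ↦ hne ?_
  exact Set.eq_of_subset_of_ncard_le (Set.inter_eq_left.1 h) (hT.ncard_eq hS).le

theorem IsLambdaAtom.hasLargeSides_of_subset (hS : IsLambdaAtom G s S) (hXS : X ⊆ S)
    (hX : s ≤ X.ncard) : HasLargeSides s X :=
  ⟨hX, calc
    s ≤ X.ncard := hX
    _ ≤ S.ncard := Set.ncard_le_ncard hXS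
    _ ≤ Sᶜ.ncard := hS.ncard_le_ncard_compl
    _ ≤ Xᶜ.ncard := Set.ncard_le_ncard (Set.compl_subset_compl.2 hXS)⟩

theorem IsLambdaAtom.hasLargeSides_union (hS : IsLambdaAtom G s S) (hT : IsLambdaAtom G s T)
    (hST : s ≤ (S ∩ T).ncard) : HasLargeSides s (S ∪ T) := by
  have hsub : (S ∩ T).ncard ≤ (S ∪ T).ncard :=
    Set.ncard_le_ncard (Set.inter_subset_left.trans Set.subset_union_left)
  have hunion := Set.ncard_union_add_ncard_inter S T
  have hhalf := hS.ncard_le_ncard_compl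
  have hcard := hS.ncard_eq hT
  have hS_compl := Set.ncard_add_ncard_compl S
  have hunion_compl := Set.ncard_add_ncard_compl (S ∪ T)
  exact ⟨by lia, by lia⟩

end RestrictedCuts

section Atoms

variable {V : Type*} [Fintype V] {G : SimpleGraph V} [DecidableRel G.Adj] {k s : ℕ} {S X : Set V}

theorem le_ncard_of_inducedEdgeBoundary_eq_empty (htri : G.CliqueFree 3)
    (hdeg : ∀ v, k ≤ G.degree v) (hk : 5 ≤ k) (hs4 : 4 ≤ s) (hs8 : s ≤ 8)
    (hX : HasLargeSides s X) (hXk : (edgeBoundary G X).ncard ≤ 3 * k)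
    (hmin : ∀ Y, HasLargeSides s Y → (edgeBoundary G X).ncard ≤ (edgeBoundary G Y).ncard)
    {A : Set V} (hAX : A ⊆ X) (hA : A.Nonempty) (hsplit : inducedEdgeBoundary G X A = ∅) :
    s ≤ A.ncard := by
  by_contra! hAs
  have hsum := ncard_edgeBoundary_add_sdiff (G := G) hAX
  rw [hsplit, Set.ncard_empty, mul_zero, add_zero] at hsum
  rcases le_or_gt s (X \ A).ncard with hB | hB
  · have hcompl : Xᶜ.ncard ≤ (X \ A)ᶜ.ncard :=
      Set.ncard_le_ncard (Set.compl_subset_compl.2 Set.sdiff_subset)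
    have hXB := hmin (X \ A) ⟨hB, hX.2.trans hcompl⟩
    have hkA := le_ncard_edgeBoundary_of_ncard_le_seven htri hdeg hk hA (by lia)
    lia
  · have hBne : (X \ A).Nonempty :=
      Set.sdiff_nonempty_of_ncard_lt_ncard (hAs.trans_le hX.1)
    exact hXk.not_gt <| three_mul_lt_ncard_edgeBoundary_of_split htri hdeg hk hAX hsplit
      (hs4.trans hX.1) hA (by lia) hBne (by lia)

theorem isRestrictedEdgeCut_of_forall_ncard_edgeBoundary_le (htri : G.CliqueFree 3)
    (hdeg : ∀ v, k ≤ G.degree v) (hk : 5 ≤ k) (hs4 : 4 ≤ s) (hs8 : s ≤ 8)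
    (hX : HasLargeSides s X) (hXk : (edgeBoundary G X).ncard ≤ 3 * k)
    (hmin : ∀ Y, HasLargeSides s Y → (edgeBoundary G X).ncard ≤ (edgeBoundary G Y).ncard) :
    IsRestrictedEdgeCut G s (edgeBoundary G X) := by
  have hs0 : 0 < s := by lia
  have hXne : X.Nonempty := Set.nonempty_of_ncard_ne_zero (hs0.trans_le hX.1).ne'
  have hXcne : Xᶜ.Nonempty := Set.nonempty_of_ncard_ne_zero (hs0.trans_le hX.2).ne'
  refine isRestrictedEdgeCut_edgeBoundary hXne hXcne ?_ ?_
  · intro A hAX hA hsplit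
    exact le_ncard_of_inducedEdgeBoundary_eq_empty htri hdeg hk hs4 hs8 hX hXk hmin hAX hA hsplit
  · intro A hAX hA hsplit
    rw [← edgeBoundary_compl] at hXk hmin
    exact le_ncard_of_inducedEdgeBoundary_eq_empty htri hdeg hk hs4 hs8 hX.compl hXk hmin
      hAX hA hsplit

theorem lambdaS_le_ncard_edgeBoundary (htri : G.CliqueFree 3)
    (hdeg : ∀ v, k ≤ G.degree v) (hk : 5 ≤ k) (hs4 : 4 ≤ s) (hs8 : s ≤ 8)
    (hlam : lambdaS G s ≤ 3 * k) (hX : HasLargeSides s X) :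
    lambdaS G s ≤ (edgeBoundary G X).ncard := by
  obtain ⟨Y, hY, hmin⟩ := exists_minimalFor_of_wellFoundedLT (HasLargeSides (V := V) s)
    (fun Y ↦ (edgeBoundary G Y).ncard) ⟨X, hX⟩
  replace hmin : ∀ Z, HasLargeSides s Z → (edgeBoundary G Y).ncard ≤ (edgeBoundary G Z).ncard :=
    fun Z hZ ↦ (le_total _ _).elim id (hmin hZ)
  refine le_trans ?_ (hmin X hX)
  by_contra! hlt
  exact hlt.not_ge <| lambdaS_le_ncard <| isRestrictedEdgeCut_of_forall_ncard_edgeBoundary_le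
    htri hdeg hk hs4 hs8 hY (hlt.le.trans hlam) hmin

theorem isLambdaFragment_of_ncard_edgeBoundary_le (htri : G.CliqueFree 3)
    (hdeg : ∀ v, k ≤ G.degree v) (hk : 5 ≤ k) (hs4 : 4 ≤ s) (hs8 : s ≤ 8)
    (hlam : lambdaS G s ≤ 3 * k) (hX : HasLargeSides s X)
    (hle : (edgeBoundary G X).ncard ≤ lambdaS G s) : IsLambdaFragment G s X :=
  have hge {Y : Set V} (hY : HasLargeSides s Y) : lambdaS G s ≤ (edgeBoundary G Y).ncard :=
    lambdaS_le_ncard_edgeBoundary htri hdeg hk hs4 hs8 hlam hY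
  ⟨isRestrictedEdgeCut_of_forall_ncard_edgeBoundary_le htri hdeg hk hs4 hs8 hX (hle.trans hlam)
    fun _ hY ↦ hle.trans (hge hY), hle.antisymm (hge hX)⟩

theorem IsLambdaAtom.lambdaS_lt_ncard_edgeBoundary (hS : IsLambdaAtom G s S)
    (htri : G.CliqueFree 3) (hdeg : ∀ v, k ≤ G.degree v) (hk : 5 ≤ k) (hs4 : 4 ≤ s) (hs8 : s ≤ 8)
    (hlam : lambdaS G s ≤ 3 * k) (hXS : X ⊂ S) (hX : s ≤ X.ncard) :
    lambdaS G s < (edgeBoundary G X).ncard := by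
  by_contra! hle
  have hfragment := isLambdaFragment_of_ncard_edgeBoundary_le htri hdeg hk hs4 hs8 hlam
    (hS.hasLargeSides_of_subset hXS.subset hX) hle
  exact (Set.ncard_lt_ncard hXS).not_ge (hS.2 X hfragment)

end Atoms

theorem statement9_general {V : Type*} [Fintype V] (G : SimpleGraph V) [DecidableRel G.Adj]
    (k s : ℕ) (htri : G.CliqueFree 3) (hdeg : ∀ v, k ≤ G.degree v) (hk : 5 ≤ k)
    (hs1 : 4 ≤ s) (hs2 : s ≤ 8) (hlam : lambdaS G s ≤ 3 * k)
    (S T : Set V) (hS : IsLambdaAtom G s S) (hT : IsLambdaAtom G s T)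
    (hne : S ≠ T) (hint : (S ∩ T).Nonempty) :
    (edgeBoundary G (S ∩ T)).ncard + (edgeBoundary G (S ∪ T)).ncard ≤ 2 * lambdaS G s ∧
    (edgeBoundary G (S \ T)).ncard + (edgeBoundary G (T \ S)).ncard ≤ 2 * lambdaS G s ∧
    (S ∩ T).ncard ≤ s - 1 ∧ (S \ T).ncard ≤ s - 1 := by
  have hsubmod := ncard_edgeBoundary_inter_add_union_le G S T
  have hsubmod_sdiff := ncard_edgeBoundary_sdiff_add_sdiff_le G S T
  rw [hS.1.2, hT.1.2, ← two_mul] at hsubmod hsubmod_sdiff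
  refine ⟨hsubmod, hsubmod_sdiff, Nat.le_sub_one_of_lt ?_, Nat.le_sub_one_of_lt ?_⟩ <;>
    by_contra! hlarge
  · have hinter := hS.lambdaS_lt_ncard_edgeBoundary htri hdeg hk hs1 hs2 hlam
      (hS.inter_ssubset hT hne) hlarge
    have hunion := lambdaS_le_ncard_edgeBoundary htri hdeg hk hs1 hs2 hlam
      (hS.hasLargeSides_union hT hlarge)
    lia
  · have hleft := hS.lambdaS_lt_ncard_edgeBoundary htri hdeg hk hs1 hs2 hlam
      (Set.sdiff_ssubset_left_iff.2 hint) hlarge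
    have hcard : (S \ T).ncard = (T \ S).ncard :=
      (Set.ncard_eq_ncard_iff_ncard_sdiff_eq_ncard_sdiff).1 (hS.ncard_eq hT)
    have hright := hT.lambdaS_lt_ncard_edgeBoundary htri hdeg hk hs1 hs2 hlam
      (Set.sdiff_ssubset_left_iff.2 (Set.inter_comm S T ▸ hint)) (hcard ▸ hlarge)
    lia

/-- (Lemma 3.1(c)) With `G` connected triangle-free
vertex-transitive of degree `k ≥ 5`, `4 ≤ s ≤ 8`, `λ_s(G)` existing and at most
`3k`, and `S ≠ T` two `λ_s`-atoms of `G` with `S ∩ T ≠ ∅`: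
`d_G(S ∩ T) + d_G(S ∪ T) ≤ 2λ_s(G)`, `d_G(S \ T) + d_G(T \ S) ≤ 2λ_s(G)`,
`|S ∩ T| ≤ s − 1` and `|S \ T| ≤ s − 1`. -/
theorem statement9 {V : Type*} [Fintype V] [DecidableEq V]
    (G : SimpleGraph V) [DecidableRel G.Adj] (k s : ℕ)
    (hconn : G.Connected) (htri : G.CliqueFree 3) (hvt : VertexTransitive G)
    (hreg : G.IsRegularOfDegree k) (hk : 5 ≤ k)
    (hs1 : 4 ≤ s) (hs2 : s ≤ 8)
    (hex : ∃ F : Set (Sym2 V), IsRestrictedEdgeCut G s F)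
    (hlam : lambdaS G s ≤ 3 * k)
    (S T : Set V) (hS : IsLambdaAtom G s S) (hT : IsLambdaAtom G s T)
    (hne : S ≠ T) (hint : (S ∩ T).Nonempty) :
    (edgeBoundary G (S ∩ T)).ncard + (edgeBoundary G (S ∪ T)).ncard ≤ 2 * lambdaS G s ∧
    (edgeBoundary G (S \ T)).ncard + (edgeBoundary G (T \ S)).ncard ≤ 2 * lambdaS G s ∧
    (S ∩ T).ncard ≤ s - 1 ∧ (S \ T).ncard ≤ s - 1 :=
  statement9_general G k s htri (fun v ↦ (hreg v).ge) hk hs1 hs2 hlam S T hS hT hne hint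
end

section
/- Let G be a bicritical simple graph. If G is not 4-factor-critical, then there exists a subset X ⊆ V(G) with |X| ≥ 4 such that the number of odd components of G − X equals |X| − 2 and every component of G − X is factor-critical. -/
open SimpleGraph

/-!
By Tutte's theorem, `G` is `p`-factor-critical if and only if `c₀(G - X) + p ≤ |X|` whenever
`p ≤ |X|`. If `G` is `p`- but not `(p + 2)`-factor-critical, parity turns a violation of the bound
for `p + 2` into equality `c₀(G - X) + p = |X|` for some `X` with `p + 2 ≤ |X|`. Take such an `X`
maximal under inclusion. Enlarging `X` by a nonempty set `S` of vertices of a component `C` of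
`G - X` replaces the contribution of `C` to `c₀`, which is at most `1`, by `c₀(C - S)`; maximality
and parity then force `c₀(C - S) + 1 ≤ |S|`, so `C` is factor-critical by the same criterion with
`p = 1`.
-/

section OddComponents

variable {V W W₁ W₂ : Type*} {G : SimpleGraph V} {H : SimpleGraph W}
  {H₁ : SimpleGraph W₁} {H₂ : SimpleGraph W₂}

lemma ncard_oddComponents_congr (e : G ≃g H) :
    G.oddComponents.ncard = H.oddComponents.ncard :=
  Nat.card_congr <| e.connectedComponentEquiv.subtypeEquiv fun c => by
    rw [Set.mem_ofPred_eq, Set.mem_ofPred_eq, ← Nat.card_coe_set_eq, ← Nat.card_coe_set_eq,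
      Nat.card_congr (ConnectedComponent.isoEquivSupp e c)]

lemma ncard_oddComponents_le_one (hG : G.Preconnected) : G.oddComponents.ncard ≤ 1 :=
  have := hG.subsingleton_connectedComponent
  Set.ncard_le_one_of_subsingleton _

lemma reachable_apply_iff_of_adj_mem_range (f : H ↪g G)
    (hf : ∀ x y, G.Adj (f x) y → y ∈ Set.range f) {x : W} {y : V} :
    G.Reachable (f x) y ↔ ∃ z, H.Reachable x z ∧ f z = y := by
  refine ⟨fun h => ?_, fun ⟨z, hz, hzy⟩ => hzy ▸ hz.map f.toHom⟩
  rw [reachable_iff_reflTransGen] at h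
  induction h with
  | refl => exact ⟨x, .refl x, rfl⟩
  | tail _ hadj ih =>
    obtain ⟨z, hxz, rfl⟩ := ih
    obtain ⟨w, rfl⟩ := hf z _ hadj
    exact ⟨w, hxz.trans (f.map_adj_iff.1 hadj).reachable, rfl⟩

lemma supp_map_of_adj_mem_range (f : H ↪g G)
    (hf : ∀ x y, G.Adj (f x) y → y ∈ Set.range f) (c : H.ConnectedComponent) :
    (c.map f.toHom).supp = f '' c.supp := by
  induction c using ConnectedComponent.ind with
  | h x =>
    ext y
    simp only [ConnectedComponent.map_mk, ConnectedComponent.mem_supp_iff, Set.mem_image,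
      ConnectedComponent.eq, reachable_comm (v := f.toHom x), reachable_comm (v := x)]
    exact reachable_apply_iff_of_adj_mem_range f hf

lemma map_injective_of_adj_mem_range (f : H ↪g G)
    (hf : ∀ x y, G.Adj (f x) y → y ∈ Set.range f) :
    Function.Injective (ConnectedComponent.map f.toHom) := fun c d hcd =>
  ConnectedComponent.supp_injective <| f.injective.image_injective <| by
    rw [← supp_map_of_adj_mem_range f hf, ← supp_map_of_adj_mem_range f hf, hcd]

lemma map_mem_oddComponents_iff_of_adj_mem_range (f : H ↪g G)
    (hf : ∀ x y, G.Adj (f x) y → y ∈ Set.range f) {c : H.ConnectedComponent} :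
    c.map f.toHom ∈ G.oddComponents ↔ c ∈ H.oddComponents := by
  rw [Set.mem_ofPred_eq, Set.mem_ofPred_eq, supp_map_of_adj_mem_range f hf,
    Set.ncard_image_of_injective _ f.injective]

lemma map_ne_map_of_adj_mem_range (f₁ : H₁ ↪g G) (f₂ : H₂ ↪g G)
    (hf₁ : ∀ x y, G.Adj (f₁ x) y → y ∈ Set.range f₁)
    (hf₂ : ∀ x y, G.Adj (f₂ x) y → y ∈ Set.range f₂)
    (hdisj : Disjoint (Set.range f₁) (Set.range f₂))
    (c₁ : H₁.ConnectedComponent) (c₂ : H₂.ConnectedComponent) :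
    c₁.map f₁.toHom ≠ c₂.map f₂.toHom := by
  intro h
  obtain ⟨v, hv⟩ := (c₁.map f₁.toHom).nonempty_supp
  have hv₁ : v ∈ f₁ '' c₁.supp := supp_map_of_adj_mem_range f₁ hf₁ c₁ ▸ hv
  have hv₂ : v ∈ f₂ '' c₂.supp := supp_map_of_adj_mem_range f₂ hf₂ c₂ ▸ h ▸ hv
  exact Set.disjoint_left.1 hdisj (Set.image_subset_range _ _ hv₁) (Set.image_subset_range _ _ hv₂)

lemma ncard_oddComponents_eq_add [Finite V] (f₁ : H₁ ↪g G) (f₂ : H₂ ↪g G)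
    (hcompl : IsCompl (Set.range f₁) (Set.range f₂)) (hadj : ∀ x y, ¬ G.Adj (f₁ x) (f₂ y)) :
    G.oddComponents.ncard = H₁.oddComponents.ncard + H₂.oddComponents.ncard := by
  have hcover : ∀ v, v ∈ Set.range f₁ ∨ v ∈ Set.range f₂ := fun v =>
    (hcompl.sup_eq_top.ge : Set.univ ⊆ _) (Set.mem_univ v)
  have hf₁ : ∀ x y, G.Adj (f₁ x) y → y ∈ Set.range f₁ := fun x y hxy =>
    (hcover y).resolve_right fun ⟨z, hz⟩ => hadj x z (hz ▸ hxy)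
  have hf₂ : ∀ x y, G.Adj (f₂ x) y → y ∈ Set.range f₂ := fun x y hxy =>
    (hcover y).resolve_left fun ⟨z, hz⟩ => hadj z x (hz ▸ hxy.symm)
  have hunion : G.oddComponents = ConnectedComponent.map f₁.toHom '' H₁.oddComponents ∪
      ConnectedComponent.map f₂.toHom '' H₂.oddComponents := by
    ext c
    constructor
    · induction c using ConnectedComponent.ind with
      | h v =>
        rcases hcover v with ⟨x, rfl⟩ | ⟨x, rfl⟩
        · exact fun h => .inl ⟨H₁.connectedComponentMk x,
            (map_mem_oddComponents_iff_of_adj_mem_range f₁ hf₁).1 h, rfl⟩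
        · exact fun h => .inr ⟨H₂.connectedComponentMk x,
            (map_mem_oddComponents_iff_of_adj_mem_range f₂ hf₂).1 h, rfl⟩
    · rintro (⟨d, hd, rfl⟩ | ⟨d, hd, rfl⟩)
      · exact (map_mem_oddComponents_iff_of_adj_mem_range f₁ hf₁).2 hd
      · exact (map_mem_oddComponents_iff_of_adj_mem_range f₂ hf₂).2 hd
  have hdisj : Disjoint (ConnectedComponent.map f₁.toHom '' H₁.oddComponents)
      (ConnectedComponent.map f₂.toHom '' H₂.oddComponents) := by
    rw [Set.disjoint_left]
    rintro _ ⟨d₁, -, rfl⟩ ⟨d₂, -, h⟩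
    exact map_ne_map_of_adj_mem_range f₁ f₂ hf₁ hf₂ hcompl.disjoint d₁ d₂ h.symm
  rw [hunion, Set.ncard_union_eq hdisj,
    Set.ncard_image_of_injective _ (map_injective_of_adj_mem_range f₁ hf₁),
    Set.ncard_image_of_injective _ (map_injective_of_adj_mem_range f₂ hf₂)]

end OddComponents

lemma ncard_union_image_compl {α : Type*} [Finite α] (s : Set α) (t : Set ↥sᶜ) :
    (s ∪ (↑) '' t).ncard = s.ncard + t.ncard := by
  rw [Set.ncard_union_eq
      (disjoint_compl_right.mono_right (Subtype.coe_image_subset _ t)),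
    Set.ncard_image_of_injective _ Subtype.val_injective]

section OddComponentCount

variable {V W : Type*} {G : SimpleGraph V} {H : SimpleGraph W}

lemma ncard_oddComponents_eq_oddComponentCount (f : H ↪g G) {X : Set V}
    (hf : Set.range f = Xᶜ) : H.oddComponents.ncard = oddComponentCount G X := by
  rw [ncard_oddComponents_congr f.isoInduceRange, hf]
  rfl

lemma oddComponentCount_empty (G : SimpleGraph V) :
    oddComponentCount G ∅ = G.oddComponents.ncard :=
  (ncard_oddComponents_eq_oddComponentCount .refl <| by
    rw [Set.compl_empty]
    exact Set.range_id).symm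

lemma oddComponentCount_induce (G : SimpleGraph V) (A : Set V) (S : Set A) :
    oddComponentCount (G.induce A) S = oddComponentCount G (Aᶜ ∪ (↑) '' S) := by
  refine ncard_oddComponents_eq_oddComponentCount
    ((Embedding.induce A).comp (Embedding.induce Sᶜ)) ?_
  have hcomp : Set.range ((Embedding.induce A).comp (Embedding.induce Sᶜ) :
      (G.induce A).induce Sᶜ ↪g G) = (↑) '' Sᶜ := by
    rw [Embedding.coe_comp, Set.range_comp]
    exact congrArg _ Subtype.range_coe
  rw [hcomp, Set.image_compl_eq_range_sdiff_image Subtype.val_injective, Subtype.range_coe,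
    Set.compl_union, compl_compl, Set.sdiff_eq]

lemma oddComponentCount_inter [Finite V] {X Y : Set V} (hXY : X ∪ Y = Set.univ)
    (hadj : ∀ x ∉ X, ∀ y ∉ Y, ¬ G.Adj x y) :
    oddComponentCount G (X ∩ Y) = oddComponentCount G X + oddComponentCount G Y := by
  refine ncard_oddComponents_eq_add
    (G.induceHomOfLE (Set.compl_subset_compl.2 Set.inter_subset_left))
    (G.induceHomOfLE (Set.compl_subset_compl.2 Set.inter_subset_right))
    ⟨?_, ?_⟩ fun x y => hadj x x.2 y y.2
  · rw [Set.disjoint_left]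
    rintro _ ⟨x, rfl⟩ ⟨y, hy⟩
    have hxy : (y : V) = x := congrArg Subtype.val hy
    exact (hXY ▸ Set.mem_univ (x : V)).elim x.2 (hxy ▸ y.2)
  · rw [codisjoint_iff_le_sup]
    rintro ⟨v, hv⟩ -
    rcases not_and_or.1 hv with hvX | hvY
    · exact .inl ⟨⟨v, hvX⟩, rfl⟩
    · exact .inr ⟨⟨v, hvY⟩, rfl⟩

lemma odd_oddComponentCount_add_ncard [Finite V] (G : SimpleGraph V) (X : Set V) :
    Odd (oddComponentCount G X + X.ncard) ↔ Odd (Nat.card V) := by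
  have hodd : Odd (oddComponentCount G X) ↔ Odd Xᶜ.ncard := odd_ncard_oddComponents _
  rw [← Set.ncard_add_ncard_compl X, Nat.odd_add, Nat.odd_add, hodd, ← Nat.not_odd_iff_even,
    ← Nat.not_odd_iff_even]
  tauto

lemma oddComponentCount_image_supp [Finite V] (c : G.ConnectedComponent) (S : Set c.supp) :
    oddComponentCount G ((↑) '' S) =
      oddComponentCount G c.supp + oddComponentCount (G.induce c.supp) S := by
  have hinter : ((↑) '' S : Set V) = c.supp ∩ (c.suppᶜ ∪ (↑) '' S) := by
    rw [Set.inter_union_distrib_left, Set.inter_compl_self, Set.empty_union,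
      Set.inter_eq_right.2 (Subtype.coe_image_subset _ S)]
  rw [oddComponentCount_induce, ← oddComponentCount_inter, ← hinter]
  · rw [← Set.union_assoc, Set.union_compl_self, Set.univ_union]
  · intro x hx y hy hxy
    have hyc : y ∈ c.supp := by_contra fun h => hy (.inl h)
    exact hx (c.mem_supp_of_adj_mem_supp hyc hxy.symm)

theorem exists_isPerfectMatching_iff_oddComponentCount_le [Finite V] :
    (∃ M : G.Subgraph, M.IsPerfectMatching) ↔ ∀ X, oddComponentCount G X ≤ X.ncard := by
  have hcount (X : Set V) : ((⊤ : G.Subgraph).deleteVerts X).coe.oddComponents.ncard =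
      oddComponentCount G X := by
    rw [ncard_oddComponents_congr (Subgraph.coeDeleteVertsIso X)]
    refine ncard_oddComponents_eq_oddComponentCount
      (Subgraph.topIso.toEmbedding.comp (Embedding.induce _)) ?_
    ext v
    constructor
    · rintro ⟨x, rfl⟩
      exact x.2
    · exact fun hv => ⟨⟨⟨v, trivial⟩, hv⟩, rfl⟩
  simp only [tutte, IsTutteViolator, not_lt, hcount]

end OddComponentCount

section FactorCritical

variable {V : Type*} {G : SimpleGraph V} {p : ℕ}

theorem isFactorCritical_iff_pFactorCritical_one : IsFactorCritical G ↔ PFactorCritical G 1 := by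
  simp only [IsFactorCritical, PFactorCritical, Set.ncard_eq_one, forall_exists_index,
    forall_eq_apply_imp_iff]

theorem pFactorCritical_iff_oddComponentCount_add_le [Finite V] :
    PFactorCritical G p ↔ ∀ X, p ≤ X.ncard → oddComponentCount G X + p ≤ X.ncard := by
  simp only [PFactorCritical, exists_isPerfectMatching_iff_oddComponentCount_le,
    oddComponentCount_induce, compl_compl]
  constructor
  · intro h X hX
    obtain ⟨P, hPX, rfl⟩ := Set.exists_subset_card_eq hX
    have hunion : P ∪ ((↑) '' ((↑) ⁻¹' X : Set ↥Pᶜ)) = X := by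
      rw [Subtype.image_preimage_coe, Set.union_inter_distrib_left, Set.union_compl_self,
        Set.univ_inter, Set.union_eq_right.2 hPX]
    have hle := h P rfl ((↑) ⁻¹' X)
    have hcard := ncard_union_image_compl P ((↑) ⁻¹' X)
    rw [hunion] at hle hcard
    omega
  · rintro h P rfl S
    have hcard := ncard_union_image_compl P S
    have hle := h (P ∪ (↑) '' S) (by omega)
    omega

theorem isFactorCritical_of_forall_ssuperset [Finite V] {X : Set V}
    (hX : ∀ Y, X ⊂ Y → oddComponentCount G Y + X.ncard < oddComponentCount G X + Y.ncard)
    (c : (G.induce Xᶜ).ConnectedComponent) :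
    IsFactorCritical ((G.induce Xᶜ).induce c.supp) := by
  rw [isFactorCritical_iff_pFactorCritical_one, pFactorCritical_iff_oddComponentCount_add_le]
  intro S hS
  set Y : Set V := X ∪ (↑) '' ((↑) '' S : Set ↥Xᶜ) with hY
  have hYcard : Y.ncard = X.ncard + S.ncard := by
    rw [hY, ncard_union_image_compl, Set.ncard_image_of_injective _ Subtype.val_injective]
  have hXY : X ⊂ Y := by
    refine Set.ssubset_iff_subset_ne.2 ⟨Set.subset_union_left, fun h => ?_⟩
    rw [← h] at hYcard
    omega
  have hYcount : oddComponentCount G Y = oddComponentCount (G.induce Xᶜ) c.supp +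
      oddComponentCount ((G.induce Xᶜ).induce c.supp) S := by
    rw [← oddComponentCount_image_supp, oddComponentCount_induce, compl_compl]
  have hXcount : oddComponentCount G X = oddComponentCount (G.induce Xᶜ) c.supp +
      ((G.induce Xᶜ).induce c.supp).oddComponents.ncard := by
    rw [← oddComponentCount_empty, ← oddComponentCount_image_supp, Set.image_empty,
      oddComponentCount_empty]
    rfl
  have hone := ncard_oddComponents_le_one c.connected_toSimpleGraph.preconnected
  have hparity : Odd (oddComponentCount ((G.induce Xᶜ).induce c.supp) S + S.ncard) ↔
      Odd ((G.induce Xᶜ).induce c.supp).oddComponents.ncard := by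
    rw [odd_oddComponentCount_add_ncard, odd_ncard_oddComponents]
  have hlt := hX Y hXY
  rw [Nat.odd_iff, Nat.odd_iff] at hparity
  simp only [ConnectedComponent.toSimpleGraph] at hone
  omega

theorem PFactorCritical.even_card_add [Finite V] (h : PFactorCritical G p)
    (hp : p ≤ Nat.card V) : Even (Nat.card V + p) := by
  obtain ⟨P, -, rfl⟩ := Set.exists_subset_card_eq (Set.ncard_univ V ▸ hp)
  have hle := pFactorCritical_iff_oddComponentCount_add_le.1 h P le_rfl
  have hparity := odd_oddComponentCount_add_ncard G P
  rw [Nat.odd_iff, Nat.odd_iff] at hparity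
  rw [Nat.even_iff]
  omega

theorem PFactorCritical.exists_oddComponentCount_add_eq_ncard [Finite V]
    (h : PFactorCritical G p) (hn : ¬ PFactorCritical G (p + 2)) :
    ∃ X : Set V, p + 2 ≤ X.ncard ∧ oddComponentCount G X + p = X.ncard := by
  rw [pFactorCritical_iff_oddComponentCount_add_le] at hn
  push Not at hn
  obtain ⟨X, hX, hlt⟩ := hn
  have hle := pFactorCritical_iff_oddComponentCount_add_le.1 h X (by omega)
  have heven := h.even_card_add (le_trans (by omega) X.ncard_le_card)
  have hparity := odd_oddComponentCount_add_ncard G X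
  rw [Nat.odd_iff, Nat.odd_iff] at hparity
  rw [Nat.even_iff] at heven
  exact ⟨X, hX, by omega⟩

end FactorCritical

theorem statement11_general {V : Type*} [Finite V] {G : SimpleGraph V} {p : ℕ}
    (h : PFactorCritical G p) (hn : ¬ PFactorCritical G (p + 2)) :
    ∃ X : Set V, p + 2 ≤ X.ncard ∧ oddComponentCount G X = X.ncard - p ∧
      ∀ c : (G.induce Xᶜ).ConnectedComponent,
        IsFactorCritical ((G.induce Xᶜ).induce c.supp) := by
  obtain ⟨X, ⟨hX, hXcount⟩, hmax⟩ :=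
    Set.Finite.exists_maximal (Set.toFinite _) (h.exists_oddComponentCount_add_eq_ncard hn)
  refine ⟨X, hX, by omega, isFactorCritical_of_forall_ssuperset fun Y hXY => ?_⟩
  have hcard : X.ncard < Y.ncard := Set.ncard_lt_ncard hXY
  have hle := pFactorCritical_iff_oddComponentCount_add_le.1 h Y (by omega)
  have hne : oddComponentCount G Y + p ≠ Y.ncard := fun hY =>
    hXY.not_subset (hmax ⟨by omega, hY⟩ hXY.subset)
  omega

/-- If a bicritical graph `G` is not 4-factor-critical, then
there is a vertex set `X` with `|X| ≥ 4` such that `c₀(G − X) = |X| − 2` and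
every component of `G − X` is factor-critical. -/
theorem statement11 {V : Type*} [Fintype V] [DecidableEq V]
    (G : SimpleGraph V)
    (hbic : PFactorCritical G 2) (hnfc : ¬ PFactorCritical G 4) :
    ∃ X : Set V, 4 ≤ X.ncard ∧ oddComponentCount G X = X.ncard - 2 ∧
      ∀ c : (G.induce Xᶜ).ConnectedComponent,
        IsFactorCritical ((G.induce Xᶜ).induce c.supp) :=
  statement11_general hbic hnfc
end
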